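/- arXiv:1509.05905 — 2 statements merged into one kernel-verified Lean document; each statement's English description precedes it below -/
import Mathlib

section
/- Let W ⊆ ℝ^n be a nonempty open set and let f : W → ℝ be arc-rational. Then f is continuous on W and arc-analytic: for every real-analytic map η : (−1,1) → ℝ^n with η((−1,1)) ⊆ W, the composition f ∘ η is real-analytic on (−1,1). (Theorem 1.11 for open subsets of ℝ^n.) -/
open MvPolynomial

/-- The set of real points of the subvariety of affine `n`-space defined by an ideal `I`
of the real polynomial ring. -/
def realPoints {n : ℕ} (I : Ideal (MvPolynomial (Fin n) ℝ)) : Set (Fin n → ℝ) :=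
  {x | ∀ P ∈ I, eval x P = 0}

/-- `f : W → ℝ` is arc-rational: for every `x ∈ W` and every irreducible real algebraic
curve through `x` (encoded by a prime ideal `I` with one-dimensional quotient and
`x ∈ Z(I)`), there is an open neighborhood `U_x` of `x` in `W` such that the restriction
of `f` to `U_x ∩ Z(I)` is continuous and rational on the curve. -/
def ArcRational {n : ℕ} (W : Set (Fin n → ℝ)) (f : (Fin n → ℝ) → ℝ) : Prop :=
  ∀ x ∈ W, ∀ I : Ideal (MvPolynomial (Fin n) ℝ), I.IsPrime →
    ringKrullDim (MvPolynomial (Fin n) ℝ ⧸ I) = 1 → x ∈ realPoints I →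
    ∃ Ux : Set (Fin n → ℝ), IsOpen Ux ∧ x ∈ Ux ∧ Ux ⊆ W ∧
      ContinuousOn f (Ux ∩ realPoints I) ∧
      ∃ p q : MvPolynomial (Fin n) ℝ, q ∉ I ∧
        ∀ y ∈ Ux ∩ realPoints I, eval y q ≠ 0 → f y = eval y p / eval y q

/-!
Restricted to coordinate lines, an arc-rational function is continuous and rational, and a function
that is continuous and rational in each variable separately is rational: near each point,
`q * f = p` for polynomials `p` and `q ≠ 0`.

If `f` were discontinuous at `x`, then `x` would be adherent to `{g > 0}`, where `g` is a polynomial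
measuring the deviation of `f` from `f x`. Choose an ideal `I` maximal among those with `x` adherent
to `Z(I) ∩ {g > 0}`; it is prime. If `Z(I)` had dimension at least two, it would carry a polynomial
vector field `V`, nonzero modulo `I`, tangent to `Z(I)` and to the spheres centred at `x`. On each
such sphere a maximum of `g` over `Z(I)` is a zero of `V g`, so `V g ∈ I` by maximality of `I`; the
same argument on the level sets of `g` in these spheres gives `V Xᵢ ∈ I` for every coordinate, a
contradiction. So `Z(I)` is a curve along which `f` is discontinuous at `x`.

For an analytic arc `η`, write `q (y + s • v) = ∑ qₖ(y) sᵏ` and likewise for `p`, and let `k` be the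
first index for which `qₖ ∘ η` is not identically zero. Continuity of `f` along the lines
`η t + s • v` gives `(qₖ ∘ η) * (f ∘ η) = pₖ ∘ η`, so `f ∘ η` is meromorphic and continuous, hence
analytic.
-/

open Filter Topology

section KrullDimension

theorem isAlgebraic_mk_of_trdeg_le_one {k A : Type*} [Field k] [CommRing A] [IsDomain A]
    [Algebra k A] (htr : Algebra.trdeg k A ≤ 1) {P : Ideal A} (hP : P ≠ ⊥) (b : A) :
    IsAlgebraic k (Ideal.Quotient.mk P b) := by
  obtain ⟨a, haP, ha⟩ := Submodule.exists_mem_ne_zero_of_ne_bot hP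
  by_contra hmk
  have hb : Transcendental k b := fun h => hmk (h.algHom (Ideal.Quotient.mkₐ k P))
  have hbasis : IsTranscendenceBasis k (fun _ : Unit => b) := by
    refine AlgebraicIndependent.isTranscendenceBasis_of_lift_trdeg_le_of_finite
      (algebraicIndependent_unique_type_iff.mpr hb) ?_
    simpa using htr
  have halg := hbasis.isAlgebraic
  rw [Set.range_const] at halg
  obtain ⟨r, hr, har⟩ :=
    (halg.isAlgebraic a).exists_nonzero_dvd (mem_nonZeroDivisors_of_ne_zero ha)
  obtain ⟨c, hc⟩ : (r : A) ∈ (Polynomial.aeval (R := k) b).range := by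
    rw [← Algebra.adjoin_singleton_eq_range_aeval]
    exact r.2
  have hcr : Polynomial.aeval b c = r := hc
  refine hmk ⟨c, ?_, ?_⟩
  · rintro rfl
    exact hr (Subtype.ext (by simpa using hcr.symm))
  · rw [← Ideal.Quotient.mkₐ_eq_mk k, Polynomial.aeval_algHom_apply, hcr, Ideal.Quotient.mkₐ_eq_mk,
      Ideal.Quotient.eq_zero_iff_mem]
    exact P.mem_of_dvd har haP

theorem krullDimLE_one_of_trdeg_le_one {k A : Type*} [Field k] [CommRing A] [IsDomain A]
    [Algebra k A] (htr : Algebra.trdeg k A ≤ 1) : Ring.KrullDimLE 1 A := by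
  refine Ring.KrullDimLE.mk₁' fun P hP _ => ?_
  have : Algebra.IsAlgebraic k (A ⧸ P) := by
    refine ⟨fun x => ?_⟩
    obtain ⟨b, rfl⟩ := Ideal.Quotient.mk_surjective x
    exact isAlgebraic_mk_of_trdeg_le_one htr hP b
  exact Ideal.Quotient.maximal_of_isField P
    (isField_of_isIntegral_of_isField' (R := k) (Field.toIsField k))

theorem ringKrullDim_quotient_eq_one {σ k : Type*} [Field k]
    {I : Ideal (MvPolynomial σ k)} [I.IsPrime] {x y : σ → k} (hx : I ≤ RingHom.ker (eval x))
    (hy : I ≤ RingHom.ker (eval y)) (hxy : x ≠ y)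
    (htr : Algebra.trdeg k (MvPolynomial σ k ⧸ I) ≤ 1) :
    ringKrullDim (MvPolynomial σ k ⧸ I) = 1 := by
  refine eq_of_le_of_not_lt ?_ fun hlt => hxy ?_
  · rw [← Nat.cast_one, ← Ring.krullDimLE_iff]
    exact krullDimLE_one_of_trdeg_le_one htr
  · have hdim : ringKrullDim (MvPolynomial σ k ⧸ I) ≤ 0 := Order.le_of_lt_succ hlt
    rw [← Nat.cast_zero, ← Ring.krullDimLE_iff] at hdim
    have hmax : I.IsMaximal :=
      Ideal.Quotient.maximal_of_isField _ Ring.KrullDimLE.isField_of_isDomain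
    have hker : I = RingHom.ker (eval x) := hmax.eq_of_le (RingHom.ker_ne_top _) hx
    funext i
    have hi : X i - C (x i) ∈ I := by simp [hker, RingHom.mem_ker]
    have hyi : eval y (X i - C (x i)) = 0 := hy hi
    rw [map_sub, eval_X, eval_C, sub_eq_zero] at hyi
    exact hyi.symm

end KrullDimension

section VectorFields

open IntermediateField.algebraAdjoinAdjoin in
theorem trdeg_le_mk_of_derivation_eq_zero {k K : Type*} [Field k] [CharZero k] [Field K]
    [Algebra k K] [Algebra.EssFiniteType k K] (s : Set K)
    (hs : ∀ D : Derivation k K K, (∀ a ∈ s, D a = 0) → D = 0) :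
    Algebra.trdeg k K ≤ Cardinal.mk s := by
  let L : IntermediateField k K := IntermediateField.adjoin k s
  have : Algebra.EssFiniteType L K := Algebra.EssFiniteType.of_comp k L K
  have hzero (φ : Module.Dual K (Ω[K⁄L])) : φ = 0 := by
    have hD : (φ.compDer (KaehlerDifferential.D L K)).restrictScalars k = 0 :=
      hs _ fun a ha => (φ.compDer (KaehlerDifferential.D L K)).map_algebraMap
        (⟨a, IntermediateField.subset_adjoin k s ha⟩ : L)
    refine Derivation.liftKaehlerDifferential_unique _ _ ?_
    ext x
    simpa using DFunLike.congr_fun hD x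
  have : Subsingleton (Ω[K⁄L]) :=
    (Module.subsingleton_dual_iff K).mp ⟨fun φ ψ => (hzero φ).trans (hzero ψ).symm⟩
  have : Algebra.FormallyUnramified L K := ⟨this⟩
  have : Algebra.IsSeparable L K := (Algebra.FormallyUnramified.iff_isSeparable L K).mp this
  have : Algebra.IsAlgebraic (Algebra.adjoin k s) K :=
    (IsFractionRing.comap_isAlgebraic_iff (K := IntermediateField.adjoin k s)).mpr
      (inferInstanceAs (Algebra.IsAlgebraic L K))
  exact Algebra.IsAlgebraic.trdeg_le_cardinalMk k s

variable {σ k : Type*} [Field k]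

theorem derivation_residueField_eq_zero {I : Ideal (MvPolynomial σ k)} [I.IsPrime]
    {D : Derivation k I.ResidueField I.ResidueField}
    (hD : ∀ i, D (algebraMap (MvPolynomial σ k) I.ResidueField (X i)) = 0) : D = 0 := by
  have hcomp : D.compAlgebraMap (MvPolynomial σ k) = 0 :=
    MvPolynomial.derivation_ext fun i => hD i
  have hP (P : MvPolynomial σ k) : D (algebraMap _ _ P) = 0 := DFunLike.congr_fun hcomp P
  ext x
  obtain ⟨a, b, -, rfl⟩ := IsFractionRing.div_surjective (A := MvPolynomial σ k ⧸ I) x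
  obtain ⟨P, rfl⟩ := Ideal.Quotient.mk_surjective a
  obtain ⟨Q, rfl⟩ := Ideal.Quotient.mk_surjective b
  simp only [← Ideal.Quotient.algebraMap_eq, ← IsScalarTower.algebraMap_apply,
    Derivation.leibniz_div, hP, smul_zero, sub_zero, Derivation.coe_zero, Pi.zero_apply]

theorem exists_derivation_lift_residueField [Finite σ] {I : Ideal (MvPolynomial σ k)}
    [I.IsPrime] (D : Derivation k I.ResidueField I.ResidueField) :
    ∃ V : Derivation k (MvPolynomial σ k) (MvPolynomial σ k), ∃ b : I.ResidueField, b ≠ 0 ∧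
      ∀ P, algebraMap _ I.ResidueField (V P) = b * D (algebraMap _ I.ResidueField P) := by
  obtain ⟨b, hb⟩ := IsLocalization.exist_integer_multiples_of_finite
    (nonZeroDivisors (MvPolynomial σ k ⧸ I))
    (fun i : σ => D (algebraMap (MvPolynomial σ k) I.ResidueField (X i)))
  choose a ha using hb
  choose v hv using fun i => Ideal.Quotient.mk_surjective (a i)
  have hext : (Algebra.linearMap (MvPolynomial σ k) I.ResidueField).compDer (mkDerivation k v) =
      algebraMap (MvPolynomial σ k ⧸ I) I.ResidueField b •
        D.compAlgebraMap (MvPolynomial σ k) := by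
    refine MvPolynomial.derivation_ext fun i => ?_
    change algebraMap _ _ (mkDerivation k v (X i)) = algebraMap (MvPolynomial σ k ⧸ I) _ b * D _
    rw [mkDerivation_X, IsScalarTower.algebraMap_apply _ (MvPolynomial σ k ⧸ I),
      Ideal.Quotient.algebraMap_eq, hv, ha, Algebra.smul_def]
    rfl
  refine ⟨mkDerivation k v, algebraMap _ _ (b : MvPolynomial σ k ⧸ I), ?_,
    fun P => DFunLike.congr_fun hext P⟩
  exact IsFractionRing.to_map_ne_zero_of_mem_nonZeroDivisors b.2

theorem exists_derivation_preserving_of_lt_trdeg [CharZero k] [Finite σ]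
    {I : Ideal (MvPolynomial σ k)} [I.IsPrime] {s : Set (MvPolynomial σ k)}
    (hs : Cardinal.mk s < Algebra.trdeg k (MvPolynomial σ k ⧸ I)) :
    ∃ V : Derivation k (MvPolynomial σ k) (MvPolynomial σ k),
      (∀ P ∈ I, V P ∈ I) ∧ (∀ a ∈ s, V a ∈ I) ∧ ∃ i, V (X i) ∉ I := by
  let π := algebraMap (MvPolynomial σ k) I.ResidueField
  have : Algebra.EssFiniteType k I.ResidueField :=
    Algebra.EssFiniteType.comp k (MvPolynomial σ k) _
  have htr : Algebra.trdeg k (MvPolynomial σ k ⧸ I) ≤ Algebra.trdeg k I.ResidueField :=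
    trdeg_le_of_injective (IsScalarTower.toAlgHom k (MvPolynomial σ k ⧸ I) I.ResidueField)
      (IsFractionRing.injective _ _)
  obtain ⟨D, hDs, hD⟩ : ∃ D : Derivation k I.ResidueField I.ResidueField,
      (∀ a ∈ π '' s, D a = 0) ∧ D ≠ 0 := by
    by_contra! h
    exact (hs.trans_le htr).not_ge
      ((trdeg_le_mk_of_derivation_eq_zero (π '' s) h).trans Cardinal.mk_image_le)
  obtain ⟨V, b, hb, hV⟩ := exists_derivation_lift_residueField D
  refine ⟨V, fun P hP => ?_, fun a ha => ?_, ?_⟩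
  · rw [← Ideal.algebraMap_residueField_eq_zero, hV, Ideal.algebraMap_residueField_eq_zero.mpr hP,
      map_zero, mul_zero]
  · rw [← Ideal.algebraMap_residueField_eq_zero, hV, hDs _ (Set.mem_image_of_mem π ha), mul_zero]
  · by_contra! hX
    refine hD (derivation_residueField_eq_zero fun i => ?_)
    have hi := hV (X i)
    rw [Ideal.algebraMap_residueField_eq_zero.mpr (hX i)] at hi
    exact (mul_eq_zero.mp hi.symm).resolve_left hb

end VectorFields

section RationalAlong

/-- `u` agrees along the filter `l` with a rational function of one variable. The denominator is
cleared, so that nothing is claimed about the value of `u` at the zeros of `q`. -/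
def RationalAlong {R : Type*} [CommRing R] (u : R → R) (l : Filter R) : Prop :=
  ∃ p q : Polynomial R, q ≠ 0 ∧ ∀ᶠ t in l, q.eval t * u t = p.eval t

/-- `F` agrees along the filter `l` with a rational function of several variables; as in
`RationalAlong`, the denominator is cleared. Taking `l = 𝓝 x` gives rationality near `x`, taking
`l = 𝓟 S` rationality on `S`. -/
def MvRationalAlong {σ R : Type*} [CommRing R] (F : (σ → R) → R) (l : Filter (σ → R)) : Prop :=
  ∃ p q : MvPolynomial σ R, q ≠ 0 ∧ ∀ᶠ z in l, eval z q * F z = eval z p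

theorem MvRationalAlong.mono {σ R : Type*} [CommRing R] {F : (σ → R) → R}
    {l l' : Filter (σ → R)} (h : MvRationalAlong F l) (hl : l' ≤ l) : MvRationalAlong F l' := by
  obtain ⟨p, q, hq, hpq⟩ := h
  exact ⟨p, q, hq, hpq.filter_mono hl⟩

variable {𝕜 : Type*} [NontriviallyNormedField 𝕜] {u v : 𝕜 → 𝕜} {t : 𝕜}

theorem eventually_nhdsNE_eval_ne_zero {q : Polynomial 𝕜} (hq : q ≠ 0) (t : 𝕜) :
    ∀ᶠ s in 𝓝[≠] t, q.eval s ≠ 0 :=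
  nhdsNE_le_cofinite t (Polynomial.finite_setOfPred_isRoot hq).compl_mem_cofinite

theorem eventuallyEq_nhds_of_eventually_mul_eq (hu : ContinuousAt u t) (hv : ContinuousAt v t)
    {q : Polynomial 𝕜} (hq : q ≠ 0) (h : ∀ᶠ s in 𝓝[≠] t, q.eval s * u s = q.eval s * v s) :
    u =ᶠ[𝓝 t] v := by
  rw [← hu.eventuallyEq_nhds_iff_eventuallyEq_nhdsNE hv]
  filter_upwards [eventually_nhdsNE_eval_ne_zero hq t, h] with s hs using mul_left_cancel₀ hs

theorem RationalAlong.of_forall_nhds {J : Set 𝕜} (hJ : IsPreconnected J)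
    (hu : ∀ t ∈ J, ContinuousAt u t) (h : ∀ t ∈ J, RationalAlong u (𝓝 t)) :
    RationalAlong u (𝓟 J) := by
  rcases J.eq_empty_or_nonempty with rfl | ⟨t₀, ht₀⟩
  · exact ⟨0, 1, one_ne_zero, by simp⟩
  obtain ⟨p, q, hq, hpq⟩ := h t₀ ht₀
  suffices hsub : J ⊆ {t | ∀ᶠ s in 𝓝 t, q.eval s * u s = p.eval s} from
    ⟨p, q, hq, eventually_principal.mpr fun t ht => (hsub ht).self_of_nhds⟩
  refine hJ.subset_of_closure_inter_subset isOpen_setOfPred_eventually_nhds ⟨t₀, ht₀, hpq⟩ ?_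
  rintro t₁ ⟨hcl, ht₁⟩
  obtain ⟨p₁, q₁, hq₁, hpq₁⟩ := h t₁ ht₁
  obtain ⟨s, hs, hs₁⟩ := ((mem_closure_iff_frequently.mp hcl).and_eventually
    hpq₁.eventually_nhds).exists
  have hcross : q * p₁ = q₁ * p := by
    refine Polynomial.eq_of_infinite_eval_eq _ _ (infinite_of_mem_nhds s ?_)
    filter_upwards [hs, hs₁] with x hx hx₁
    simp only [Polynomial.eval_mul, ← hx, ← hx₁]
    ring
  refine eventuallyEq_nhds_of_eventually_mul_eq (q.continuous.continuousAt.mul (hu t₁ ht₁))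
    p.continuous.continuousAt hq₁ ?_
  filter_upwards [hpq₁.filter_mono nhdsWithin_le_nhds] with x hx
  rw [← Polynomial.eval_mul, ← hcross, Polynomial.eval_mul, ← hx]
  ring

end RationalAlong

section LinearAlgebra

variable {ι Ω : Type*} [Fintype ι]

theorem exists_det_ne_zero_of_forall_dotProduct [DecidableEq ι] {K : Type*} [Field K]
    (r : Ω → ι → K) (h : ∀ c : ι → K, (∀ w, r w ⬝ᵥ c = 0) → c = 0) :
    ∃ g : ι → Ω, (Matrix.of fun i => r (g i)).det ≠ 0 := by
  have htop : Submodule.span K (Set.range r) = ⊤ := by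
    by_contra hne
    obtain ⟨φ, hφ, hker⟩ := Submodule.exists_le_ker_of_lt_top _ (lt_top_iff_ne_top.mpr hne)
    refine hφ ((dotProductEquiv K ι).symm.map_eq_zero_iff.mp (h _ fun w => ?_))
    have hw : φ (r w) = 0 := hker (Submodule.subset_span ⟨w, rfl⟩)
    rwa [← (dotProductEquiv K ι).apply_symm_apply φ, dotProductEquiv_apply_apply,
      dotProduct_comm] at hw
  obtain ⟨κ, a, -, hspan, hind⟩ := exists_linearIndependent' K r
  let B : Module.Basis κ K (ι → K) := Module.Basis.mk hind (by rw [hspan, htop])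
  let e : ι ≃ κ := (Pi.basisFun K ι).indexEquiv B
  refine ⟨a ∘ e, ?_⟩
  have hunit : IsUnit (Matrix.of fun i => r (a (e i))) :=
    Matrix.linearIndependent_rows_iff_isUnit.mp (hind.comp e e.injective)
  exact ((Matrix.isUnit_iff_isUnit_det _).mp hunit).ne_zero

theorem exists_det_ne_zero_of_forall_dotProduct_of_isDomain [DecidableEq ι] {A : Type*}
    [CommRing A] [IsDomain A] (r : Ω → ι → A) (h : ∀ c : ι → A, (∀ w, r w ⬝ᵥ c = 0) → c = 0) :
    ∃ g : ι → Ω, (Matrix.of fun i => r (g i)).det ≠ 0 := by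
  let φ := algebraMap A (FractionRing A)
  obtain ⟨g, hg⟩ := exists_det_ne_zero_of_forall_dotProduct (fun w => φ ∘ r w) fun c hc => by
    obtain ⟨d, hd⟩ := IsLocalization.exist_integer_multiples_of_finite (nonZeroDivisors A) c
    choose c' hc' using hd
    have hc'φ : φ ∘ c' = φ d • c := funext fun i => (hc' i).trans (Algebra.smul_def _ _)
    have hc'0 : c' = 0 := h c' fun w => IsFractionRing.injective A (FractionRing A) <| by
      rw [RingHom.map_dotProduct, hc'φ, dotProduct_smul, hc, smul_zero, map_zero]
    refine (smul_eq_zero_iff_right (IsFractionRing.to_map_ne_zero_of_mem_nonZeroDivisors d.2)).mp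
      (hc'φ.symm.trans ?_)
    rw [hc'0]
    exact funext fun _ => map_zero φ
  refine ⟨g, fun hdet => hg ?_⟩
  exact (φ.map_det (Matrix.of fun i => r (g i))).symm.trans (by rw [hdet, map_zero])

theorem exists_dotProduct_eq_zero_of_infinite {R : Type*} [CommRing R] [IsDomain R]
    (r : Ω → ι → Polynomial R) {Y : Set R} (hY : Y.Infinite)
    (h : ∀ t ∈ Y, ∃ c : ι → R, c ≠ 0 ∧ ∀ w, (fun i => (r w i).eval t) ⬝ᵥ c = 0) :
    ∃ c : ι → Polynomial R, c ≠ 0 ∧ ∀ w, r w ⬝ᵥ c = 0 := by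
  classical
  by_contra! hr
  obtain ⟨g, hg⟩ := exists_det_ne_zero_of_forall_dotProduct_of_isDomain r fun c hc => by
    by_contra hc0
    obtain ⟨w, hw⟩ := hr c hc0
    exact hw (hc w)
  refine hg (Polynomial.eq_zero_of_infinite_isRoot _ (hY.mono fun t ht => ?_))
  obtain ⟨c, hc0, hc⟩ := h t ht
  have hdet : ((Matrix.of fun i => r (g i)).map (Polynomial.evalRingHom t)).det = 0 :=
    Matrix.exists_mulVec_eq_zero_iff.mp ⟨c, hc0, funext fun i => hc (g i)⟩
  exact ((Polynomial.evalRingHom t).map_det _).trans hdet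

end LinearAlgebra

section SeparatelyRational

theorem eval_eq_dotProduct_coeff {σ R : Type*} [CommRing R] {S : Finset (σ →₀ ℕ)}
    {p : MvPolynomial σ R} (hp : p.support ⊆ S) (w : σ → R) :
    eval w p = (fun m : S => eval w (monomial (m : σ →₀ ℕ) (1 : R))) ⬝ᵥ fun m => coeff ↑m p := by
  conv_lhs => rw [p.as_sum, map_sum]
  rw [Finset.sum_subset hp fun m _ hm => by simp [notMem_support_iff.mp hm], ← Finset.sum_coe_sort]
  exact Finset.sum_congr rfl fun m _ => by simp [eval_monomial, mul_comm]

theorem exists_support_subset_and_coeff_eq {σ R : Type*} [CommRing R] {S : Finset (σ →₀ ℕ)}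
    (c : S → R) : ∃ p : MvPolynomial σ R, p.support ⊆ S ∧ (fun m : S => coeff ↑m p) = c := by
  classical
  refine ⟨∑ m : S, monomial ↑m (c m), ?_, ?_⟩
  · refine support_sum.trans (Finset.biUnion_subset.mpr fun m _ => ?_)
    exact support_monomial_subset.trans (Finset.singleton_subset_iff.mpr m.2)
  · funext m
    simp [coeff_sum, coeff_monomial]

theorem exists_eval_cons_eq {n : ℕ} {R : Type*} [CommRing R]
    (P : MvPolynomial (Fin n) (Polynomial R)) :
    ∃ p : MvPolynomial (Fin (n + 1)) R, (p = 0 ↔ P = 0) ∧ ∀ t w,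
      eval (Fin.cons t w : Fin (n + 1) → R) p = (eval (Polynomial.C ∘ w) P).eval t := by
  let e := (renameEquiv R (_root_.finSuccEquiv n)).trans (optionEquivRight R (Fin n))
  refine ⟨e.symm P, by simp, fun t w => ?_⟩
  have hcomp : eval (Fin.cons t w : Fin (n + 1) → R) =
      ((Polynomial.evalRingHom t).comp (eval (Polynomial.C ∘ w))).comp (e : _ →+* _) := by
    refine MvPolynomial.ringHom_ext (fun a => ?_) (Fin.cases ?_ fun i => ?_)
    · simp [e]
    · simp [e]
    · simp [e]
  simpa using DFunLike.congr_fun hcomp (e.symm P)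

/-- The row of coefficients of the equation `b * p(w) = a * q(w)`, viewed as a homogeneous linear
equation in the coefficients of two polynomials `p` and `q` with exponents in `S`. -/
noncomputable def crossRow {σ R : Type*} [CommRing R] (S : Finset (σ →₀ ℕ)) (a b : R) (w : σ → R) :
    S ⊕ S → R :=
  Sum.elim (b • fun m : S => eval w (monomial ↑m 1)) (-a • fun m : S => eval w (monomial ↑m 1))

theorem crossRow_dotProduct_coeff {σ R : Type*} [CommRing R] {S : Finset (σ →₀ ℕ)}
    {p q : MvPolynomial σ R} (hp : p.support ⊆ S) (hq : q.support ⊆ S) (a b : R) (w : σ → R) :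
    crossRow S a b w ⬝ᵥ Sum.elim (fun m => coeff ↑m p) (fun m => coeff ↑m q) =
      b * eval w p - a * eval w q := by
  rw [crossRow, sumElim_dotProduct_sumElim, smul_dotProduct, smul_dotProduct,
    ← eval_eq_dotProduct_coeff hp, ← eval_eq_dotProduct_coeff hq, smul_eq_mul, smul_eq_mul]
  ring

theorem eval_crossRow {σ R : Type*} [CommRing R] (S : Finset (σ →₀ ℕ)) (a b : Polynomial R)
    (w : σ → R) (t : R) (i : S ⊕ S) : (crossRow S a b (Polynomial.C ∘ w) i).eval t =
      crossRow S (a.eval t) (b.eval t) w i := by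
  cases i <;> simp [crossRow, eval_monomial, Finsupp.prod, Polynomial.eval_prod]

-- The equations `b w (t) * p (w) = a w (t) * q (w)` are linear in the coefficients of `p` and `q`,
-- with coefficients polynomial in `t`: solvability for infinitely many `t` implies it over `R[t]`.
theorem exists_forall_mul_eval_eq_of_infinite {σ R : Type*} [CommRing R] [IsDomain R]
    {J : σ → Set R} (hJ : ∀ i, (J i).Infinite) {a b : (σ → R) → Polynomial R}
    (hb : ∀ w ∈ Set.univ.pi J, b w ≠ 0) {S : Finset (σ →₀ ℕ)} {Y : Set R} (hY : Y.Infinite)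
    (h : ∀ t ∈ Y, ∃ p q : MvPolynomial σ R, p.support ⊆ S ∧ q.support ⊆ S ∧ q ≠ 0 ∧
      ∀ w ∈ Set.univ.pi J, (b w).eval t * eval w p = (a w).eval t * eval w q) :
    ∃ P Q : MvPolynomial σ (Polynomial R), Q ≠ 0 ∧ ∀ w ∈ Set.univ.pi J,
      b w * eval (Polynomial.C ∘ w) P = a w * eval (Polynomial.C ∘ w) Q := by
  obtain ⟨c, hc0, hc⟩ := exists_dotProduct_eq_zero_of_infinite
    (fun w : Set.univ.pi J => crossRow S (a w) (b w) (Polynomial.C ∘ w.1)) hY fun t ht => by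
    obtain ⟨p, q, hpS, hqS, hq, hpq⟩ := h t ht
    refine ⟨Sum.elim (fun m => coeff ↑m p) fun m => coeff ↑m q, fun h0 => hq ?_, fun w => ?_⟩
    · ext m
      by_cases hm : m ∈ S
      · exact congrFun h0 (Sum.inr ⟨m, hm⟩)
      · exact notMem_support_iff.mp fun h => hm (hqS h)
    · simp only [eval_crossRow, crossRow_dotProduct_coeff hpS hqS, hpq w w.2, sub_self]
  obtain ⟨P, hPS, hP⟩ := exists_support_subset_and_coeff_eq (c ∘ Sum.inl)
  obtain ⟨Q, hQS, hQ⟩ := exists_support_subset_and_coeff_eq (c ∘ Sum.inr)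
  have hcPQ : c = Sum.elim (fun m : S => coeff ↑m P) fun m : S => coeff ↑m Q := by
    rw [hP, hQ, Sum.elim_comp_inl_inr]
  have hPQ : ∀ w ∈ Set.univ.pi J,
      b w * eval (Polynomial.C ∘ w) P = a w * eval (Polynomial.C ∘ w) Q := fun w hw => by
    rw [← sub_eq_zero, ← crossRow_dotProduct_coeff hPS hQS, ← hcPQ]
    exact hc ⟨w, hw⟩
  refine ⟨P, Q, fun hQ0 => hc0 ?_, hPQ⟩
  have hP0 : P = 0 := by
    refine MvPolynomial.funext_set (fun i => Polynomial.C '' J i)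
      (fun i => (hJ i).image Polynomial.C_injective.injOn) fun z hz => ?_
    choose w hwJ hwz using fun i => hz i (Set.mem_univ i)
    obtain rfl : Polynomial.C ∘ w = z := funext hwz
    have hw : w ∈ Set.univ.pi J := fun i _ => hwJ i
    refine (mul_eq_zero.mp ?_).resolve_left (hb w hw)
    rw [hPQ w hw, hQ0, map_zero, mul_zero]
  rw [hcPQ, hP0, hQ0]
  ext (m | m) <;> simp

theorem exists_infinite_fiber_of_not_countable {α β : Type*} [Countable β] {T : Set α}
    (hT : ¬ T.Countable) (g : α → β) : ∃ b, {t ∈ T | g t = b}.Infinite := by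
  by_contra! h
  refine hT ((Set.countable_iUnion fun b => (h b).countable).mono fun t ht => ?_)
  exact Set.mem_iUnion.mpr ⟨g t, ht, rfl⟩

variable {𝕜 : Type*} [NontriviallyNormedField 𝕜]

theorem MvRationalAlong.of_cons {n : ℕ} {T : Set 𝕜} (hTo : IsOpen T) (hT : ¬ T.Countable)
    {J : Fin n → Set 𝕜} (hJ : ∀ i, (J i).Infinite) {F : (Fin (n + 1) → 𝕜) → 𝕜}
    (hw : ∀ t ∈ T, MvRationalAlong (fun w => F (Fin.cons t w)) (𝓟 (Set.univ.pi J)))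
    (ht : ∀ w ∈ Set.univ.pi J, RationalAlong (fun t => F (Fin.cons t w)) (𝓟 T))
    (hc : ∀ w ∈ Set.univ.pi J, ContinuousOn (fun t => F (Fin.cons t w)) T) :
    MvRationalAlong F (𝓟 {z | z 0 ∈ T ∧ Fin.tail z ∈ Set.univ.pi J}) := by
  choose! p q hq hpq using hw
  choose! a b hb hab using ht
  simp only [eventually_principal] at hpq hab
  obtain ⟨S, hS⟩ := exists_infinite_fiber_of_not_countable hT fun t => (p t).support ∪ (q t).support
  obtain ⟨P, Q, hQ, hPQ⟩ := exists_forall_mul_eval_eq_of_infinite hJ hb hS fun t ht =>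
    ⟨p t, q t, Finset.subset_union_left.trans_eq ht.2, Finset.subset_union_right.trans_eq ht.2,
      hq t ht.1, fun w hw => by rw [← hpq t ht.1 w hw, ← hab w hw t ht.1]; ring⟩
  obtain ⟨P', -, hP'⟩ := exists_eval_cons_eq P
  obtain ⟨Q', hQ'0, hQ'⟩ := exists_eval_cons_eq Q
  refine ⟨P', Q', hQ'0.not.mpr hQ, eventually_principal.mpr fun z hz => ?_⟩
  obtain ⟨ht, hw⟩ := hz
  rw [← Fin.cons_self_tail z, hP', hQ']
  refine (eventuallyEq_nhds_of_eventually_mul_eq (u := fun s => Polynomial.eval s _ * F _)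
    (q := b _) ((Polynomial.continuous _).continuousAt.mul
      ((hc _ hw).continuousAt (hTo.mem_nhds ht))) (Polynomial.continuous _).continuousAt
    (hb _ hw) ?_).self_of_nhds
  filter_upwards [mem_nhdsWithin_of_mem_nhds (hTo.mem_nhds ht)] with s hs
  rw [← Polynomial.eval_mul, hPQ _ hw, Polynomial.eval_mul, ← hab _ hw s hs]
  ring

theorem MvRationalAlong.of_separately [CompleteSpace 𝕜] {n : ℕ} {J : Fin n → Set 𝕜}
    (hJo : ∀ i, IsOpen (J i)) (hJ : ∀ i, (J i).Nonempty) {F : (Fin n → 𝕜) → 𝕜}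
    (hF : ∀ z ∈ Set.univ.pi J, ∀ i, RationalAlong (fun s => F (Function.update z i s)) (𝓟 (J i)))
    (hc : ∀ z ∈ Set.univ.pi J, ∀ i, ContinuousOn (fun s => F (Function.update z i s)) (J i)) :
    MvRationalAlong F (𝓟 (Set.univ.pi J)) := by
  induction n with
  | zero =>
    refine ⟨C (F 0), 1, one_ne_zero, Eventually.of_forall fun z => ?_⟩
    rw [Subsingleton.elim z 0]
    simp
  | succ n ih =>
    have hcons {t w} (ht : t ∈ J 0) (hw : w ∈ Set.univ.pi fun i : Fin n => J i.succ) :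
        (Fin.cons t w : Fin (n + 1) → 𝕜) ∈ Set.univ.pi J :=
      fun i _ => Fin.cases ht (fun i => hw i trivial) i
    have hJ0 : ¬ (J 0).Countable := fun h => by
      obtain ⟨x, hx, hxJ⟩ := (h.dense_compl 𝕜).inter_open_nonempty _ (hJo 0) (hJ 0)
      exact hxJ hx
    obtain ⟨t₀, ht₀⟩ := hJ 0
    have hJinf (i : Fin n) : (J i.succ).Infinite :=
      infinite_of_mem_nhds _ ((hJo i.succ).mem_nhds (hJ i.succ).choose_spec)
    refine (MvRationalAlong.of_cons (hJo 0) hJ0 hJinf (fun t ht => ?_) (fun w hw => ?_)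
      fun w hw => ?_).mono (principal_mono.mpr fun z hz =>
        ⟨hz 0 trivial, fun i _ => hz i.succ trivial⟩)
    · refine ih (fun i => hJo i.succ) (fun i => hJ i.succ) (fun w hw i => ?_) fun w hw i => ?_
      · simpa only [← Fin.cons_update] using hF _ (hcons ht hw) i.succ
      · simpa only [← Fin.cons_update] using hc _ (hcons ht hw) i.succ
    · simpa only [Fin.update_cons_zero] using hF _ (hcons ht₀ hw) 0
    · simpa only [Fin.update_cons_zero] using hc _ (hcons ht₀ hw) 0

end SeparatelyRational

section PolynomialArcs

/-- A polynomially parametrized arc in affine space: the coordinates of `c` are polynomials in the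
parameter. The non-constant ones trace out the curves on which arc-rationality is first used. -/
def IsPolynomialArc {σ R : Type*} [CommSemiring R] (c : R → σ → R) : Prop :=
  ∃ γ : σ → Polynomial R, ∀ t i, c t i = (γ i).eval t

theorem isPolynomialArc_update {σ R : Type*} [CommSemiring R] [DecidableEq σ] (z : σ → R) (i : σ) :
    IsPolynomialArc (Function.update z i) := by
  refine ⟨Function.update (fun j => Polynomial.C (z j)) i Polynomial.X, fun t j => ?_⟩
  rcases eq_or_ne j i with rfl | hj
  · simp
  · simp [hj]

theorem isPolynomialArc_line {σ R : Type*} [CommSemiring R] (y v : σ → R) :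
    IsPolynomialArc fun s : R => y + s • v :=
  ⟨fun i => Polynomial.C (y i) + Polynomial.C (v i) * Polynomial.X,
    fun t i => by simp [mul_comm (v i) t]⟩

theorem IsPolynomialArc.continuous {σ R : Type*} [CommSemiring R] [TopologicalSpace R]
    [IsTopologicalSemiring R] {c : R → σ → R} (hc : IsPolynomialArc c) : Continuous c := by
  obtain ⟨γ, hγ⟩ := hc
  exact continuous_pi fun i => by simpa only [hγ] using (γ i).continuous

theorem IsPolynomialArc.exists_pullback {σ R : Type*} [CommSemiring R] {c : R → σ → R}
    (hc : IsPolynomialArc c) : ∃ φ : MvPolynomial σ R →ₐ[R] Polynomial R,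
      ∀ P t, (φ P).eval t = eval (c t) P := by
  obtain ⟨γ, hγ⟩ := hc
  refine ⟨aeval γ, fun P t => ?_⟩
  rw [← Polynomial.coe_aeval_eq_eval, comp_aeval_apply, aeval_eq_eval]
  exact congrArg (eval · P) (funext fun i => (hγ t i).symm)

theorem IsPolynomialArc.exists_curve {n : ℕ} {c : ℝ → Fin n → ℝ} (hc : IsPolynomialArc c)
    {t₀ t₁ : ℝ} (hne : c t₀ ≠ c t₁) :
    ∃ I : Ideal (MvPolynomial (Fin n) ℝ), I.IsPrime ∧
      ringKrullDim (MvPolynomial (Fin n) ℝ ⧸ I) = 1 ∧ (∀ t, c t ∈ realPoints I) ∧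
      ∀ P ∉ I, ∃ p : Polynomial ℝ, p ≠ 0 ∧ ∀ t, p.eval t = eval (c t) P := by
  obtain ⟨φ, hφ⟩ := hc.exists_pullback
  have hprime : (RingHom.ker φ).IsPrime := RingHom.ker_isPrime φ
  have hmem (t : ℝ) : c t ∈ realPoints (RingHom.ker φ) := fun P hP => by
    rw [← hφ, RingHom.mem_ker.mp hP, Polynomial.eval_zero]
  have htr : Algebra.trdeg ℝ (MvPolynomial (Fin n) ℝ ⧸ RingHom.ker φ) ≤ 1 := by
    rw [← Polynomial.trdeg_of_isDomain (R := ℝ)]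
    exact trdeg_le_of_injective (Ideal.kerLiftAlg φ) (Ideal.kerLiftAlg_injective φ)
  exact ⟨RingHom.ker φ, hprime, ringKrullDim_quotient_eq_one (hmem t₀) (hmem t₁) hne htr, hmem,
    fun P hP => ⟨φ P, hP, hφ P⟩⟩

end PolynomialArcs

section ArcRational

variable {n : ℕ} {W : Set (Fin n → ℝ)} {f : (Fin n → ℝ) → ℝ} {c : ℝ → Fin n → ℝ} {t₀ : ℝ}

theorem ArcRational.continuousAt_comp_and_rationalAlong_comp (hf : ArcRational W f)
    (hc : IsPolynomialArc c) (ht₀ : c t₀ ∈ W) :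
    ContinuousAt (f ∘ c) t₀ ∧ RationalAlong (f ∘ c) (𝓝 t₀) := by
  by_cases hconst : ∀ t, c t₀ = c t
  · have hfc : f ∘ c = fun _ => f (c t₀) := funext fun t => congrArg f (hconst t).symm
    rw [hfc]
    exact ⟨continuousAt_const, Polynomial.C (f (c t₀)), 1, one_ne_zero, by simp⟩
  obtain ⟨t₁, ht₁⟩ := not_forall.mp hconst
  obtain ⟨I, hI, hdim, hmem, hpull⟩ := hc.exists_curve ht₁
  obtain ⟨U, hUo, hU, -, hcont, P, Q, hQ, hPQ⟩ := hf _ ht₀ I hI hdim (hmem t₀)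
  have hcU : ∀ᶠ t in 𝓝 t₀, c t ∈ U := hc.continuous.continuousAt.eventually (hUo.mem_nhds hU)
  have hfc : ContinuousAt (f ∘ c) t₀ := by
    refine (hcont _ ⟨hU, hmem t₀⟩).tendsto.comp
      (tendsto_nhdsWithin_of_tendsto_nhds_of_eventually_within _ hc.continuous.continuousAt ?_)
    filter_upwards [hcU] with t ht using ⟨ht, hmem t⟩
  obtain ⟨φ, hφ⟩ := hc.exists_pullback
  obtain ⟨q, hq, hqQ⟩ := hpull Q hQ
  refine ⟨hfc, φ P, q, hq, eventuallyEq_nhds_of_eventually_mul_eq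
    (q.continuous.continuousAt.mul hfc) (φ P).continuous.continuousAt hq ?_⟩
  filter_upwards [hcU.filter_mono nhdsWithin_le_nhds, eventually_nhdsNE_eval_ne_zero hq t₀]
    with t ht hqt
  have hft := hPQ _ ⟨ht, hmem t⟩ (hqQ t ▸ hqt)
  rw [Function.comp_apply, hft, ← hqQ, hφ, mul_div_cancel₀ _ hqt]

theorem ArcRational.continuousAt_comp (hf : ArcRational W f) (hc : IsPolynomialArc c)
    (ht₀ : c t₀ ∈ W) : ContinuousAt (f ∘ c) t₀ :=
  (hf.continuousAt_comp_and_rationalAlong_comp hc ht₀).1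

theorem ArcRational.mvRationalAlong_nhds (hW : IsOpen W) (hf : ArcRational W f)
    {x : Fin n → ℝ} (hx : x ∈ W) : MvRationalAlong f (𝓝 x) := by
  obtain ⟨δ, hδ, hball⟩ := Metric.isOpen_iff.mp hW x hx
  rw [ball_pi x hδ] at hball
  have hupd {z} (hz : z ∈ Set.univ.pi fun i => Metric.ball (x i) δ) (i : Fin n) {s : ℝ}
      (hs : s ∈ Metric.ball (x i) δ) : Function.update z i s ∈ W :=
    hball ((Set.update_mem_pi_iff_of_mem hz).mpr fun _ => hs)
  have hcont {z} (hz : z ∈ Set.univ.pi fun i => Metric.ball (x i) δ) (i : Fin n) {s : ℝ}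
      (hs : s ∈ Metric.ball (x i) δ) : ContinuousAt (fun s => f (Function.update z i s)) s :=
    hf.continuousAt_comp (isPolynomialArc_update z i) (hupd hz i hs)
  refine (MvRationalAlong.of_separately (fun i => Metric.isOpen_ball)
    (fun i => ⟨x i, Metric.mem_ball_self hδ⟩) (fun z hz i => ?_)
    fun z hz i s hs => (hcont hz i hs).continuousWithinAt).mono ?_
  · exact RationalAlong.of_forall_nhds (convex_ball _ _).isPreconnected
      (fun s hs => hcont hz i hs) fun s hs => (hf.continuousAt_comp_and_rationalAlong_comp
        (isPolynomialArc_update z i) (hupd hz i hs)).2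
  · rw [le_principal_iff, ← ball_pi x hδ]
    exact Metric.ball_mem_nhds x hδ

end ArcRational

section Flows

theorem eventuallyEq_zero_of_hasDerivAt_linear {E : Type*} [NormedAddCommGroup E]
    [NormedSpace ℝ E] {M : ℝ → E →L[ℝ] E} {u : ℝ → E} {t₀ : ℝ} (hM : ContinuousAt M t₀)
    (hu : ∀ᶠ t in 𝓝 t₀, HasDerivAt u (M t (u t)) t) (hu₀ : u t₀ = 0) : u =ᶠ[𝓝 t₀] 0 := by
  have hlip : ∀ᶠ t in 𝓝 t₀, LipschitzOnWith (‖M t₀‖₊ + 1) (M t) Set.univ := by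
    filter_upwards [hM.nnnorm.eventually_le_const (lt_add_one _)] with t ht
    exact ((M t).lipschitz.weaken ht).lipschitzOnWith
  refine ODE_solution_unique_of_eventually hlip (hu.mono fun t ht => ⟨ht, Set.mem_univ _⟩)
    (.of_forall fun t => ⟨?_, Set.mem_univ _⟩) hu₀
  simp

theorem analyticAt_eval_mvPolynomial_comp {σ 𝕜 E : Type*} [Fintype σ] [NontriviallyNormedField 𝕜]
    [CompleteSpace 𝕜] [NormedAddCommGroup E] [NormedSpace 𝕜 E] {η : E → σ → 𝕜} {t : E}
    (hη : AnalyticAt 𝕜 η t) (P : MvPolynomial σ 𝕜) : AnalyticAt 𝕜 (fun s => eval (η s) P) t := by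
  simp only [← aeval_eq_eval]
  exact AnalyticAt.aeval_mvPolynomial (fun i => analyticAt_pi_iff.mp hη i) P

variable {σ : Type*} (V : Derivation ℝ (MvPolynomial σ ℝ) (MvPolynomial σ ℝ))

theorem exists_integralCurve [Finite σ] (y : σ → ℝ) : ∃ α : ℝ → σ → ℝ, α 0 = y ∧
    ∀ᶠ t in 𝓝 0, HasDerivAt α (fun i => eval (α t) (V (X i))) t := by
  have := Fintype.ofFinite σ
  have hV : ContDiffAt ℝ 1 (fun x i => eval x (V (X i))) y :=
    contDiffAt_pi.mpr fun i => (analyticAt_eval_mvPolynomial_comp analyticAt_id _).contDiffAt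
  obtain ⟨α, hα₀, ε, hε, hα⟩ :=
    hV.exists_forall_mem_closedBall_exists_eq_forall_mem_Ioo_hasDerivAt₀ 0
  exact ⟨α, hα₀, eventually_of_mem (Ioo_mem_nhds (by linarith) (by linarith)) hα⟩

variable {V} {α : ℝ → σ → ℝ}

theorem hasDerivAt_eval_integralCurve {t : ℝ}
    (hα : HasDerivAt α (fun i => eval (α t) (V (X i))) t) (P : MvPolynomial σ ℝ) :
    HasDerivAt (fun s => eval (α s) P) (eval (α t) (V P)) t := by
  induction P using MvPolynomial.induction_on with
  | C r => simpa using hasDerivAt_const t r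
  | add p q hp hq => simpa using hp.fun_add hq
  | mul_X p i hp =>
    refine ((hp.fun_mul (hasDerivAt_pi.mp hα i)).congr_deriv ?_).congr_of_eventuallyEq (by simp)
    simp only [Derivation.leibniz, smul_eq_mul, map_add, map_mul, eval_X]
    ring

-- Generators `F` of `J` satisfy a linear system `V F = A F`, so along the curve they solve a linear
-- ODE with zero initial value.
theorem eventually_le_ker_eval_integralCurve [Finite σ] {J : Ideal (MvPolynomial σ ℝ)}
    (hJ : ∀ P ∈ J, V P ∈ J) {t₀ : ℝ}
    (hα : ∀ᶠ t in 𝓝 t₀, HasDerivAt α (fun i => eval (α t) (V (X i))) t)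
    (hα₀ : J ≤ RingHom.ker (eval (α t₀))) : ∀ᶠ t in 𝓝 t₀, J ≤ RingHom.ker (eval (α t)) := by
  obtain ⟨m, F, rfl⟩ :=
    Submodule.fg_iff_exists_fin_generating_family.mp (IsNoetherian.noetherian J)
  have hF (i) : F i ∈ Submodule.span (MvPolynomial σ ℝ) (Set.range F) :=
    Submodule.subset_span ⟨i, rfl⟩
  choose A hA using fun i => (Submodule.mem_span_range_iff_exists_fun _).mp (hJ _ (hF i))
  let M (t : ℝ) : (Fin m → ℝ) →L[ℝ] (Fin m → ℝ) :=
    ContinuousLinearMap.pi fun i => ∑ j, eval (α t) (A i j) • ContinuousLinearMap.proj j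
  have hM : ContinuousAt M t₀ := by
    refine continuousAt_clm_apply.mpr fun w => continuousAt_pi.mpr fun i => ?_
    simp only [M, ContinuousLinearMap.pi_apply, sum_apply]
    exact tendsto_finsetSum _ fun j _ =>
      (hasDerivAt_eval_integralCurve hα.self_of_nhds (A i j)).continuousAt.mul continuousAt_const
  have hu : ∀ᶠ t in 𝓝 t₀, HasDerivAt (fun s i => eval (α s) (F i))
      (M t fun i => eval (α t) (F i)) t := by
    filter_upwards [hα] with t ht
    refine hasDerivAt_pi.mpr fun i => (hasDerivAt_eval_integralCurve ht (F i)).congr_deriv ?_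
    simp [M, ← hA i]
  filter_upwards [eventuallyEq_zero_of_hasDerivAt_linear hM hu
    (funext fun i => hα₀ (hF i))] with t ht
  refine Submodule.span_le.mpr ?_
  rintro _ ⟨i, rfl⟩
  exact congrFun ht i

end Flows

section CriticalPoints

theorem derivation_mem_sup_span {k A : Type*} [CommSemiring k] [CommSemiring A] [Algebra k A]
    {V : Derivation k A A} {I : Ideal A} (hI : ∀ P ∈ I, V P ∈ I) {s : Set A}
    (hs : ∀ a ∈ s, V a ∈ I) {P : A} (hP : P ∈ I ⊔ Ideal.span s) : V P ∈ I ⊔ Ideal.span s := by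
  rw [← Ideal.span_eq I, ← Ideal.span_union] at hP ⊢
  induction hP using Submodule.span_induction with
  | mem a ha => exact Ideal.subset_span (.inl (ha.elim (hI a) (hs a)))
  | zero => simp
  | add a b _ _ ha hb => simpa using Ideal.add_mem _ ha hb
  | smul c a ha hVa =>
    rw [smul_eq_mul, Derivation.leibniz]
    exact Ideal.add_mem _ (Ideal.mul_mem_left _ c hVa) (Ideal.mul_mem_right _ _ ha)

variable {n : ℕ} {I : Ideal (MvPolynomial (Fin n) ℝ)} {s : Set (MvPolynomial (Fin n) ℝ)}

theorem isClosed_realPoints (I : Ideal (MvPolynomial (Fin n) ℝ)) : IsClosed (realPoints I) := by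
  simp only [realPoints, Set.ofPred_forall]
  exact isClosed_biInter fun P _ => isClosed_eq (continuous_eval P) continuous_const

theorem mem_realPoints_sup_span {y : Fin n → ℝ} :
    y ∈ realPoints (I ⊔ Ideal.span s) ↔ y ∈ realPoints I ∧ ∀ a ∈ s, eval y a = 0 := by
  change I ⊔ Ideal.span s ≤ RingHom.ker (eval y) ↔ _
  rw [sup_le_iff, Ideal.span_le]
  rfl

variable {V : Derivation ℝ (MvPolynomial (Fin n) ℝ) (MvPolynomial (Fin n) ℝ)}

theorem eval_derivation_eq_zero_of_isMaxOn_realPoints (hI : ∀ P ∈ I, V P ∈ I) {z : Fin n → ℝ}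
    (hz : z ∈ realPoints I) {h : MvPolynomial (Fin n) ℝ}
    (hmax : IsMaxOn (fun y => eval y h) (realPoints I) z) : eval z (V h) = 0 := by
  obtain ⟨α, rfl, hα⟩ := exists_integralCurve V z
  refine IsLocalMax.hasDerivAt_eq_zero ?_ (hasDerivAt_eval_integralCurve hα.self_of_nhds h)
  filter_upwards [eventually_le_ker_eval_integralCurve hI hα hz] with t ht using hmax ht

theorem exists_eval_derivation_eq_zero_of_isBounded (hI : ∀ P ∈ I, V P ∈ I)
    (hs : ∀ a ∈ s, V a ∈ I) {y : Fin n → ℝ} (hy : y ∈ realPoints I)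
    (hb : Bornology.IsBounded {z ∈ realPoints I | ∀ a ∈ s, eval z a = eval y a})
    (h : MvPolynomial (Fin n) ℝ) :
    ∃ z ∈ realPoints I, (∀ a ∈ s, eval z a = eval y a) ∧ eval y h ≤ eval z h ∧
      eval z (V h) = 0 := by
  set J := I ⊔ Ideal.span ((fun a => a - C (eval y a)) '' s) with hJ
  have hmem {z} : z ∈ realPoints J ↔ z ∈ realPoints I ∧ ∀ a ∈ s, eval z a = eval y a := by
    simp [hJ, mem_realPoints_sup_span, sub_eq_zero]
  have hVJ : ∀ P ∈ J, V P ∈ J := fun P =>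
    derivation_mem_sup_span hI (by simpa [Set.forall_mem_image] using hs)
  have hcompact : IsCompact (realPoints J) :=
    Metric.isCompact_of_isClosed_isBounded (isClosed_realPoints J) (hb.subset fun z => hmem.mp)
  have hyJ : y ∈ realPoints J := hmem.mpr ⟨hy, fun _ _ => rfl⟩
  obtain ⟨z, hz, hmax⟩ := hcompact.exists_isMaxOn ⟨y, hyJ⟩ (continuous_eval h).continuousOn
  exact ⟨z, (hmem.mp hz).1, (hmem.mp hz).2, hmax hyJ,
    eval_derivation_eq_zero_of_isMaxOn_realPoints hVJ hz hmax⟩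

end CriticalPoints

section SquaredDistance

variable {σ : Type*} [Fintype σ]

/-- The squared Euclidean distance to `x`, as a polynomial; its level sets are the spheres on
which critical points are sought. -/
noncomputable def sqDist (x : σ → ℝ) : MvPolynomial σ ℝ :=
  ∑ i, (X i - C (x i)) ^ 2

variable {x y : σ → ℝ}

theorem eval_sqDist : eval y (sqDist x) = ∑ i, (y i - x i) ^ 2 := by
  simp [sqDist]

theorem dist_lt_of_eval_sqDist_lt {ε : ℝ} (hε : 0 < ε) (h : eval y (sqDist x) < ε ^ 2) :
    dist y x < ε := by
  refine (dist_pi_lt_iff hε).mpr fun i => abs_lt_of_sq_lt_sq (lt_of_le_of_lt ?_ h) hε.le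
  rw [eval_sqDist]
  exact Finset.single_le_sum (f := fun i => (y i - x i) ^ 2) (fun i _ => sq_nonneg _)
    (Finset.mem_univ i)

theorem mem_closure_iff_eval_sqDist_lt {S : Set (σ → ℝ)} :
    x ∈ closure S ↔ ∀ δ > 0, ∃ y ∈ S, eval y (sqDist x) < δ := by
  refine ⟨fun h δ hδ => ?_, fun h => Metric.mem_closure_iff.mpr fun ε hε => ?_⟩
  · have hlt : ∀ᶠ y in 𝓝 x, eval y (sqDist x) < δ :=
      (continuous_eval _).continuousAt.eventually_lt_const (by simpa [eval_sqDist] using hδ)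
    exact ((mem_closure_iff_frequently.mp h).and_eventually hlt).exists
  · obtain ⟨y, hy, hlt⟩ := h (ε ^ 2) (by positivity)
    exact ⟨y, hy, dist_comm y x ▸ dist_lt_of_eval_sqDist_lt hε hlt⟩

theorem isBounded_setOf_eval_sqDist_eq (x : σ → ℝ) (r : ℝ) :
    Bornology.IsBounded {y | eval y (sqDist x) = r} := by
  refine (Metric.isBounded_ball (x := x) (r := |r| + 1)).subset fun y hy => ?_
  refine dist_lt_of_eval_sqDist_lt (by positivity) ?_
  rw [Set.mem_ofPred_eq.mp hy]
  nlinarith [le_abs_self r, abs_nonneg r]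

end SquaredDistance

section CurveSelection

variable {n : ℕ} {x : Fin n → ℝ} {S : Set (Fin n → ℝ)} {I : Ideal (MvPolynomial (Fin n) ℝ)}
  {g h : MvPolynomial (Fin n) ℝ}

theorem exists_maximal_mem_closure_realPoints_inter (hS : x ∈ closure S) :
    ∃ I : Ideal (MvPolynomial (Fin n) ℝ),
      Maximal (fun I => x ∈ closure (realPoints I ∩ S)) I := by
  refine exists_maximal_of_wellFoundedGT _ ⟨⊥, ?_⟩
  simpa [realPoints] using hS

theorem mem_of_maximal_of_mem_closure (hI : Maximal (fun I => x ∈ closure (realPoints I ∩ S)) I)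
    (hh : x ∈ closure (realPoints I ∩ S ∩ {y | eval y h = 0})) : h ∈ I := by
  refine hI.le_of_ge (y := I ⊔ Ideal.span {h}) (closure_mono ?_ hh) le_sup_left
    (Ideal.mem_sup_right (Ideal.mem_span_singleton_self h))
  rintro y ⟨⟨hyI, hyS⟩, hyh⟩
  exact ⟨mem_realPoints_sup_span.mpr ⟨hyI, by simpa using hyh⟩, hyS⟩

theorem mem_realPoints_of_mem_closure_inter (hx : x ∈ closure (realPoints I ∩ S)) :
    x ∈ realPoints I :=
  (isClosed_realPoints I).closure_subset_iff.mpr Set.inter_subset_left hx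

theorem isPrime_of_maximal_mem_closure
    (hI : Maximal (fun I => x ∈ closure (realPoints I ∩ S)) I) : I.IsPrime := by
  refine Ideal.isPrime_iff.mpr ⟨?_, fun {a b} hab => ?_⟩
  · rintro rfl
    simpa using mem_realPoints_of_mem_closure_inter hI.prop 1 trivial
  · have hsub : realPoints I ∩ S ⊆ realPoints I ∩ S ∩ {y | eval y a = 0} ∪
        realPoints I ∩ S ∩ {y | eval y b = 0} := fun y hy => by
      rw [← Set.inter_union_distrib_left]
      exact ⟨hy, mul_eq_zero.mp (map_mul (eval y) a b ▸ hy.1 _ hab)⟩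
    have hx := closure_mono hsub hI.prop
    rw [closure_union] at hx
    exact hx.imp (mem_of_maximal_of_mem_closure hI) (mem_of_maximal_of_mem_closure hI)

variable {V : Derivation ℝ (MvPolynomial (Fin n) ℝ) (MvPolynomial (Fin n) ℝ)}

theorem derivation_mem_of_maximal_mem_closure
    (hI : Maximal (fun I => x ∈ closure (realPoints I ∩ S)) I) (hVI : ∀ P ∈ I, V P ∈ I)
    {s : Set (MvPolynomial (Fin n) ℝ)} (hVs : ∀ a ∈ s, V a ∈ I) (hx : sqDist x ∈ s)
    (hS : ∀ y ∈ S, ∀ z, (∀ a ∈ s, eval z a = eval y a) → eval y h ≤ eval z h → z ∈ S) :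
    V h ∈ I := by
  refine mem_of_maximal_of_mem_closure hI (mem_closure_iff_eval_sqDist_lt.mpr fun δ hδ => ?_)
  obtain ⟨y, ⟨hyI, hyS⟩, hyδ⟩ := mem_closure_iff_eval_sqDist_lt.mp hI.prop δ hδ
  obtain ⟨z, hzI, hzs, hzh, hVh⟩ := exists_eval_derivation_eq_zero_of_isBounded hVI hVs hyI
    ((isBounded_setOf_eval_sqDist_eq x _).subset fun z hz => hz.2 _ hx) h
  exact ⟨z, ⟨⟨hzI, hS y hyS z hzs hzh⟩, hVh⟩, (hzs _ hx).trans_lt hyδ⟩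

theorem trdeg_le_one_of_maximal_mem_closure
    (hI : Maximal (fun I => x ∈ closure (realPoints I ∩ {y | 0 < eval y g})) I) :
    Algebra.trdeg ℝ (MvPolynomial (Fin n) ℝ ⧸ I) ≤ 1 := by
  have hprime := isPrime_of_maximal_mem_closure hI
  by_contra! htr
  obtain ⟨V, hVI, hVx, i, hi⟩ := exists_derivation_preserving_of_lt_trdeg (I := I)
    (s := {sqDist x}) (by simpa using htr)
  have hVg : V g ∈ I := derivation_mem_of_maximal_mem_closure hI hVI hVx rfl
    fun y hy z _ hyz => lt_of_lt_of_le hy hyz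
  refine hi (derivation_mem_of_maximal_mem_closure hI hVI (s := {sqDist x, g}) ?_ (.inl rfl) ?_)
  · rintro a (rfl | rfl)
    exacts [hVx _ rfl, hVg]
  · intro y hy z hz _
    exact hy.trans_eq (hz g (.inr rfl)).symm

theorem exists_curve_mem_closure_realPoints_inter (hg : eval x g ≤ 0)
    (hx : x ∈ closure {y | 0 < eval y g}) :
    ∃ I : Ideal (MvPolynomial (Fin n) ℝ), I.IsPrime ∧
      ringKrullDim (MvPolynomial (Fin n) ℝ ⧸ I) = 1 ∧ x ∈ realPoints I ∧
      x ∈ closure (realPoints I ∩ {y | 0 < eval y g}) := by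
  obtain ⟨I, hI⟩ := exists_maximal_mem_closure_realPoints_inter hx
  have hprime := isPrime_of_maximal_mem_closure hI
  have hxI := mem_realPoints_of_mem_closure_inter hI.prop
  obtain ⟨y, hyI, hyg⟩ := closure_nonempty_iff.mp ⟨x, hI.prop⟩
  have hyx : y ≠ x := fun h => hg.not_gt (h ▸ hyg)
  exact ⟨I, hprime, ringKrullDim_quotient_eq_one hyI hxI hyx
    (trdeg_le_one_of_maximal_mem_closure hI), hxI, hI.prop⟩

end CurveSelection

section Continuity

theorem exists_eval_ne_zero {σ R : Type*} [CommRing R] [IsDomain R] [Infinite R]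
    {P : MvPolynomial σ R} (hP : P ≠ 0) : ∃ z, eval z P ≠ 0 := by
  simpa [MvPolynomial.funext_iff] using hP

/-- Where `q * f = p` with `q ≠ 0`, this polynomial is positive exactly at the points at which `f`
deviates from `a` by more than `ε`. -/
noncomputable def deviation {σ R : Type*} [CommRing R] (p q : MvPolynomial σ R) (a ε : R) :
    MvPolynomial σ R :=
  (p - C a * q) ^ 2 - C (ε ^ 2) * q ^ 2

theorem eval_deviation_pos_iff {σ R : Type*} [CommRing R] [LinearOrder R] [IsStrictOrderedRing R]
    {p q : MvPolynomial σ R} {a b ε : R} (hε : 0 ≤ ε) {y : σ → R}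
    (h : eval y q * b = eval y p) :
    0 < eval y (deviation p q a ε) ↔ ε < |b - a| ∧ eval y q ≠ 0 := by
  have heval : eval y (deviation p q a ε) = eval y q ^ 2 * ((b - a) ^ 2 - ε ^ 2) := by
    simp only [deviation, map_sub, map_mul, map_pow, eval_C, ← h]
    ring
  rcases eq_or_ne (eval y q) 0 with hq | hq
  · simp [heval, hq]
  · rw [heval, mul_pos_iff_of_pos_left (by positivity), sub_pos, sq_lt_sq, abs_of_nonneg hε,
      and_iff_left hq]

variable {n : ℕ} {W : Set (Fin n → ℝ)} {f : (Fin n → ℝ) → ℝ} {x : Fin n → ℝ}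

theorem ArcRational.frequently_and_eval_ne_zero (hW : IsOpen W) (hf : ArcRational W f)
    (hx : x ∈ W) {q : MvPolynomial (Fin n) ℝ} (hq : q ≠ 0) {U : Set ℝ} (hU : IsOpen U)
    (h : ∃ᶠ y in 𝓝 x, f y ∈ U) : ∃ᶠ y in 𝓝 x, f y ∈ U ∧ eval y q ≠ 0 := by
  obtain ⟨z, hz⟩ := exists_eval_ne_zero hq
  rw [← frequently_frequently_nhds]
  refine (h.and_eventually (hW.mem_nhds hx)).mono fun y ⟨hyU, hyW⟩ => ?_
  have hline := isPolynomialArc_line y (z - y)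
  have hline₀ : y + (0 : ℝ) • (z - y) = y := by simp
  obtain ⟨φ, hφ⟩ := hline.exists_pullback
  have hφq : φ q ≠ 0 := fun h₀ => hz <| by
    simpa [h₀] using (hφ q 1).symm
  have hfU : ∀ᶠ s : ℝ in 𝓝 0, f (y + s • (z - y)) ∈ U :=
    (hf.continuousAt_comp hline (t₀ := 0) (by rwa [hline₀])).eventually
      (hU.mem_nhds (by simpa using hyU))
  have htends : Tendsto (fun s : ℝ => y + s • (z - y)) (𝓝[≠] 0) (𝓝 y) :=
    (hline.continuous.tendsto' 0 y hline₀).mono_left nhdsWithin_le_nhds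
  refine htends.frequently (Eventually.frequently ?_)
  filter_upwards [hfU.filter_mono nhdsWithin_le_nhds, eventually_nhdsNE_eval_ne_zero hφq 0]
    with s hsU hsq using ⟨hsU, hφ q s ▸ hsq⟩

theorem ArcRational.continuousAt (hW : IsOpen W) (hf : ArcRational W f) (hx : x ∈ W) :
    ContinuousAt f x := by
  obtain ⟨p, q, hq, hpq⟩ := hf.mvRationalAlong_nhds hW hx
  refine Metric.nhds_basis_closedBall.tendsto_right_iff.mpr fun ε hε => ?_
  by_contra hfar
  have hpos {y} (hy : eval y q * f y = eval y p) :=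
    eval_deviation_pos_iff (a := f x) hε.le hy
  have hclosure : x ∈ closure {y | 0 < eval y (deviation p q (f x) ε)} := by
    have hfreq := hf.frequently_and_eval_ne_zero hW hx hq Metric.isClosed_closedBall.isOpen_compl
      (not_eventually.mp hfar)
    refine mem_closure_iff_frequently.mpr ((hfreq.and_eventually hpq).mono ?_)
    rintro y ⟨⟨hyε, hyq⟩, hy⟩
    exact (hpos hy).mpr ⟨by simpa [Real.dist_eq] using hyε, hyq⟩
  have hxle : eval x (deviation p q (f x) ε) ≤ 0 := by
    simp [← not_lt, hpos hpq.self_of_nhds, hε.not_gt]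
  obtain ⟨I, hI, hdim, hxI, hxclosure⟩ := exists_curve_mem_closure_realPoints_inter hxle hclosure
  obtain ⟨U, hUo, hxU, -, hcont, -⟩ := hf x hx I hI hdim hxI
  have hnear : ∀ᶠ y in 𝓝 x, y ∈ U ∩ realPoints I → |f y - f x| < ε :=
    eventually_nhdsWithin_iff.mp (Metric.tendsto_nhds.mp (hcont x ⟨hxU, hxI⟩).tendsto ε hε)
  obtain ⟨y, ⟨hyI, hyε⟩, hynear, hyU, hy⟩ :=
    ((mem_closure_iff_frequently.mp hxclosure).and_eventually
      (hnear.and ((hUo.eventually_mem hxU).and hpq))).exists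
  exact lt_asymm ((hpos hy).mp hyε).1 (hynear ⟨hyU, hyI⟩)

end Continuity

section Analyticity

theorem coeff_eq_of_eventually_pow_mul_eq {u : ℝ → ℝ} (hu : ContinuousAt u 0) {k : ℕ}
    {B : Polynomial ℝ} (h : ∀ᶠ s in 𝓝 0, s ^ k * u s = B.eval s) : B.coeff k = u 0 := by
  induction k generalizing B with
  | zero => simpa [Polynomial.coeff_zero_eq_eval_zero] using h.self_of_nhds.symm
  | succ k ih =>
    have hB₀ : B.coeff 0 = 0 := by
      simpa [Polynomial.coeff_zero_eq_eval_zero] using h.self_of_nhds.symm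
    obtain ⟨B, rfl⟩ := Polynomial.X_dvd_iff.mpr hB₀
    rw [Polynomial.coeff_X_mul]
    refine ih (eventuallyEq_nhds_of_eventually_mul_eq ((continuousAt_id.pow k).mul hu)
      B.continuous.continuousAt Polynomial.X_ne_zero ?_)
    filter_upwards [h.filter_mono nhdsWithin_le_nhds] with s hs
    simpa [pow_succ', mul_assoc] using hs

theorem coeff_mul_eq_of_eventually_mul_eq {u : ℝ → ℝ} (hu : ContinuousAt u 0) {k : ℕ}
    {A B : Polynomial ℝ} (hA : ∀ j < k, A.coeff j = 0)
    (h : ∀ᶠ s in 𝓝 0, A.eval s * u s = B.eval s) : A.coeff k * u 0 = B.coeff k := by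
  obtain ⟨A, rfl⟩ := Polynomial.X_pow_dvd_iff.mpr hA
  have hk := coeff_eq_of_eventually_pow_mul_eq (k := k) (A.continuous.continuousAt.mul hu)
    (by simpa [mul_assoc] using h)
  simp [hk, Polynomial.coeff_X_pow_mul', Polynomial.coeff_zero_eq_eval_zero]

/-- The expansion of `P (y + s • v)` in powers of `s`; the coefficients are polynomials in `y`. -/
noncomputable def lineExpansion {σ R : Type*} [CommSemiring R] (v : σ → R) :
    MvPolynomial σ R →ₐ[R] Polynomial (MvPolynomial σ R) :=
  aeval fun i => Polynomial.C (X i) + Polynomial.C (C (v i)) * Polynomial.X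

theorem eval_map_lineExpansion {σ R : Type*} [CommSemiring R] (v y : σ → R) (P : MvPolynomial σ R)
    (s : R) : ((lineExpansion v P).map (eval y)).eval s = eval (y + s • v) P := by
  have h : ((Polynomial.evalRingHom s).comp (Polynomial.mapRingHom (eval y))).comp
      (lineExpansion v).toRingHom = eval (y + s • v) :=
    MvPolynomial.ringHom_ext (by simp [lineExpansion]) (by simp [lineExpansion, mul_comm s])
  exact DFunLike.congr_fun h P

theorem exists_eval_coeff_lineExpansion_ne_zero {σ R : Type*} [CommRing R] [IsDomain R]
    [Infinite R] {P : MvPolynomial σ R} (hP : P ≠ 0) (y : σ → R) :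
    ∃ v k, eval y ((lineExpansion v P).coeff k) ≠ 0 := by
  obtain ⟨z, hz⟩ := exists_eval_ne_zero hP
  refine ⟨z - y, ?_⟩
  by_contra! hcoeff
  have hmap : (lineExpansion (z - y) P).map (eval y) = 0 := Polynomial.ext (by simpa using hcoeff)
  exact hz (by simpa [hmap] using (eval_map_lineExpansion (z - y) y P 1).symm)

variable {n : ℕ} {W : Set (Fin n → ℝ)} {f : (Fin n → ℝ) → ℝ} {η : ℝ → Fin n → ℝ} {t₀ : ℝ}

theorem ArcRational.eval_coeff_lineExpansion_mul_eq (hf : ArcRational W f) {y : Fin n → ℝ}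
    (hy : y ∈ W) {p q : MvPolynomial (Fin n) ℝ}
    (hpq : ∀ᶠ z in 𝓝 y, eval z q * f z = eval z p) {v : Fin n → ℝ} {k : ℕ}
    (hq : ∀ j < k, eval y ((lineExpansion v q).coeff j) = 0) :
    eval y ((lineExpansion v q).coeff k) * f y = eval y ((lineExpansion v p).coeff k) := by
  have hline := isPolynomialArc_line y v
  have hline₀ : y + (0 : ℝ) • v = y := by simp
  have h := coeff_mul_eq_of_eventually_mul_eq (k := k) (A := (lineExpansion v q).map (eval y))
    (B := (lineExpansion v p).map (eval y))
    (hf.continuousAt_comp hline (t₀ := 0) (by rwa [hline₀])) (by simpa using hq) <| by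
      simp only [eval_map_lineExpansion]
      exact (hline.continuous.tendsto' 0 y hline₀).eventually hpq
  simpa using h

theorem ArcRational.exists_eval_mul_comp_eq (hW : IsOpen W) (hf : ArcRational W f)
    (hη : ContinuousAt η t₀) (ht₀ : η t₀ ∈ W) :
    ∃ p q : MvPolynomial (Fin n) ℝ, (¬ ∀ᶠ t in 𝓝 t₀, eval (η t) q = 0) ∧
      ∀ᶠ t in 𝓝 t₀, eval (η t) q * f (η t) = eval (η t) p := by
  obtain ⟨p, q, hq, hpq⟩ := hf.mvRationalAlong_nhds hW ht₀
  obtain ⟨v, m, hm⟩ := exists_eval_coeff_lineExpansion_ne_zero hq (η t₀)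
  have hex : ∃ k, ¬ ∀ᶠ t in 𝓝 t₀, eval (η t) ((lineExpansion v q).coeff k) = 0 :=
    ⟨m, fun h => hm h.self_of_nhds⟩
  classical
  have hlow : ∀ᶠ t in 𝓝 t₀, ∀ j < Nat.find hex, eval (η t) ((lineExpansion v q).coeff j) = 0 :=
    (Set.finite_lt_nat _).eventually_all.mpr fun j hj => not_not.mp (Nat.find_min hex hj)
  refine ⟨(lineExpansion v p).coeff (Nat.find hex), _, Nat.find_spec hex, ?_⟩
  filter_upwards [hlow, hη.eventually (hW.mem_nhds ht₀),
    hη.eventually (eventually_eventually_nhds.mpr hpq)] with t hlow_t htW hpq_t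
  exact hf.eval_coeff_lineExpansion_mul_eq htW hpq_t hlow_t

theorem ArcRational.analyticAt_comp (hW : IsOpen W) (hf : ArcRational W f)
    (hη : AnalyticAt ℝ η t₀) (ht₀ : η t₀ ∈ W) : AnalyticAt ℝ (f ∘ η) t₀ := by
  obtain ⟨p, q, hq, hpq⟩ := hf.exists_eval_mul_comp_eq hW hη.continuousAt ht₀
  have hp_an := analyticAt_eval_mvPolynomial_comp hη p
  have hq_an := analyticAt_eval_mvPolynomial_comp hη q
  have hmero : MeromorphicAt (f ∘ η) t₀ := by
    refine (hp_an.meromorphicAt.fun_div hq_an.meromorphicAt).congr ?_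
    filter_upwards [hq_an.eventually_eq_zero_or_eventually_ne_zero.resolve_left hq,
      hpq.filter_mono nhdsWithin_le_nhds] with t hqt hpqt
    rw [← hpqt, mul_div_cancel_left₀ _ hqt, Function.comp_apply]
  exact hmero.analyticAt ((hf.continuousAt hW ht₀).comp hη.continuousAt)

end Analyticity

/-- **Theorem 1.11** for open subsets of `ℝⁿ`. An arc-rational function on a nonempty
open set `W ⊆ ℝⁿ` is continuous and arc-analytic: its composition with every real
analytic arc `η : (-1,1) → W` is real-analytic. -/
theorem arcRational_is_continuous_and_arcAnalytic
    (n : ℕ) (W : Set (Fin n → ℝ)) (hW : IsOpen W) (hne : W.Nonempty)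
    (f : (Fin n → ℝ) → ℝ) (hf : ArcRational W f) :
    ContinuousOn f W ∧
    ∀ η : ℝ → (Fin n → ℝ), AnalyticOn ℝ η (Set.Ioo (-1 : ℝ) 1) →
      (∀ t ∈ Set.Ioo (-1 : ℝ) 1, η t ∈ W) →
      AnalyticOn ℝ (f ∘ η) (Set.Ioo (-1 : ℝ) 1) := by
  refine ⟨fun x hx => (hf.continuousAt hW hx).continuousWithinAt, fun η hη hηW => ?_⟩
  rw [isOpen_Ioo.analyticOn_iff_analyticOnNhd] at hη ⊢
  exact fun t ht => hf.analyticAt_comp hW (hη t ht) (hηW t ht)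
end

section
/- Let U ⊆ ℂ² be a nonempty connected open set and let f : U → ℂ be a function such that for every irreducible polynomial P ∈ ℂ[x,y] and every set A ⊆ U with A contained in {(x,y) ∈ ℂ² : P(x,y) = 0 and ∇P(x,y) ≠ (0,0)}, open in the Euclidean subspace topology of the complex zero set of P, and homeomorphic to the open unit disc in ℂ, the restriction f|_A is regular, i.e., for every a ∈ A there exist polynomials p, q ∈ ℂ[x,y] with q(a) ≠ 0 and f(z) = p(z)/q(z) for every z ∈ A with q(z) ≠ 0. Then f is regular on U. (Theorem 9.1 for domains in ℂ².) -/
open MvPolynomial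

/-- The complex zero set of a polynomial in two variables. -/
def complexZeroSet (P : MvPolynomial (Fin 2) ℂ) : Set (Fin 2 → ℂ) :=
  {v | eval v P = 0}

/-- `A` is a smooth algebraic arc of the complex plane curve `P = 0`: it consists of
smooth points of the curve, is open in the subspace topology of the complex zero set of
`P`, and is homeomorphic to the open unit disc. -/
def IsSmoothComplexArc (P : MvPolynomial (Fin 2) ℂ) (A : Set (Fin 2 → ℂ)) : Prop :=
  (∀ v ∈ A, eval v P = 0 ∧
    (eval v (pderiv 0 P) ≠ 0 ∨ eval v (pderiv 1 P) ≠ 0)) ∧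
  (∃ O : Set (Fin 2 → ℂ), IsOpen O ∧ A = O ∩ complexZeroSet P) ∧
  Nonempty (A ≃ₜ (Metric.ball (0 : ℂ) 1))

/-!
Near a point of `U` the function is rational in each variable separately. As there are uncountably
many vertical lines `x = const`, on infinitely many of them the degree is at most a common `n`, and
a rational function of degree at most `n` is determined by its values at `2n + 1` points. Cauchy
interpolation at `2n + 1` points over `ℂ[x]` therefore produces coprime polynomials `P`, `Q` with
`f Q = P` on infinitely many vertical lines, and hence, by rationality in `x`, on a whole bidisc.

Where `Q` vanishes, the relation `f Q = P` forces `P` to vanish too. By Bézout over `ℂ(x)`, the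
common zeros of `P` and `Q` lie over finitely many values of `x`, whereas by Hurwitz's theorem the
zeros of `Q` near a given one lie over a whole neighbourhood. So `Q` has no zeros where `f Q = P`
holds locally; in particular `f` is analytic, and the identity theorem extends the relation
`f Q = P` from one point to all of `U`.
-/

open Filter Set Metric
open Polynomial (evalRingHom map_evalRingHom_eval)
open scoped Polynomial Topology nonZeroDivisors

section RationalFunctions

/-- `g` is a quotient of two polynomials on `S`, with a denominator that has no zero on `S`.
The quotient is written without division, so that `R` need not be a field. -/
def IsRationalOn {R : Type*} [CommRing R] (S : Set R) (g : R → R) : Prop :=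
  ∃ p q : R[X], ∀ x ∈ S, q.eval x ≠ 0 ∧ g x * q.eval x = p.eval x

variable {R : Type*} [CommRing R] [IsDomain R]

theorem mul_eq_mul_of_infinite_of_mul_eval_eq {S : Set R} (hS : S.Infinite) {g : R → R}
    {p₁ q₁ p₂ q₂ : R[X]} (h₁ : ∀ x ∈ S, g x * q₁.eval x = p₁.eval x)
    (h₂ : ∀ x ∈ S, g x * q₂.eval x = p₂.eval x) : p₁ * q₂ = p₂ * q₁ := by
  refine Polynomial.eq_of_infinite_eval_eq _ _ (hS.mono fun x hx => ?_)
  simp only [mem_ofPred_eq, Polynomial.eval_mul, ← h₁ x hx, ← h₂ x hx]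
  ring

theorem IsRationalOn.mul_eval_eq_of_infinite {S : Set R} {g : R → R} (hg : IsRationalOn S g)
    {p q : R[X]} (h : {x ∈ S | g x * q.eval x = p.eval x}.Infinite) {x : R} (hx : x ∈ S) :
    g x * q.eval x = p.eval x := by
  obtain ⟨u, v, huv⟩ := hg
  have hcross : p * v = u * q :=
    mul_eq_mul_of_infinite_of_mul_eval_eq h (fun y hy => hy.2) fun y hy => (huv y hy.1).2
  have hcross_x := congr(Polynomial.eval x $hcross)
  simp only [Polynomial.eval_mul, ← (huv x hx).2] at hcross_x
  apply mul_right_cancel₀ (huv x hx).1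
  linear_combination -hcross_x

theorem isRationalOn_of_forall_exists [UniqueFactorizationMonoid R] {S : Set R}
    (hS : S.Infinite) {g : R → R}
    (h : ∀ a ∈ S, ∃ p q : R[X], q.eval a ≠ 0 ∧
      ∀ x ∈ S, q.eval x ≠ 0 → g x * q.eval x = p.eval x) : IsRationalOn S g := by
  obtain ⟨a, ha⟩ := hS.nonempty
  obtain ⟨p₀, q₀, hq₀a, hpq₀⟩ := h a ha
  have hq₀ : q₀ ≠ 0 := by rintro rfl; simp at hq₀a
  obtain ⟨q, p, d, hqp, rfl, rfl⟩ := UniqueFactorizationMonoid.exists_reduced_factors q₀ hq₀ p₀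
  refine ⟨p, q, fun b hb => ?_⟩
  obtain ⟨p', q', hq'b, hpq'⟩ := h b hb
  have hq' : q' ≠ 0 := by rintro rfl; simp at hq'b
  have hgood : {x ∈ S | (d * q * q').eval x ≠ 0}.Infinite :=
    hS.sdiff (Polynomial.finite_setOfPred_isRoot (mul_ne_zero hq₀ hq'))
  have hcross : d * p * q' = p' * (d * q) :=
    mul_eq_mul_of_infinite_of_mul_eval_eq hgood
      (fun x hx => hpq₀ x hx.1 (left_ne_zero_of_mul (Polynomial.eval_mul (R := R) ▸ hx.2)))
      (fun x hx => hpq' x hx.1 (right_ne_zero_of_mul (Polynomial.eval_mul (R := R) ▸ hx.2)))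
  have hcross_reduced : p * q' = p' * q :=
    mul_left_cancel₀ (left_ne_zero_of_mul hq₀) (by linear_combination hcross)
  have hq_dvd : q ∣ q' := hqp.dvd_of_dvd_mul_left ⟨p', hcross_reduced.trans (mul_comm _ _)⟩
  have hcross_b := congr(Polynomial.eval b $hcross_reduced)
  simp only [Polynomial.eval_mul, ← hpq' b hb hq'b] at hcross_b
  refine ⟨fun h0 => hq'b (Polynomial.eval_eq_zero_of_dvd_of_eval_eq_zero hq_dvd h0), ?_⟩
  apply mul_right_cancel₀ hq'b
  linear_combination -hcross_b

end RationalFunctions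

section Bivariate

theorem exists_infinite_setOf_le {α : Type*} {S : Set α} (hS : ¬ S.Countable) (d : α → ℕ) :
    ∃ n, {x ∈ S | d x ≤ n}.Infinite := by
  by_contra! hfin
  refine hS ((countable_iUnion fun n => (hfin n).countable).mono fun x hx => ?_)
  exact mem_iUnion.2 ⟨d x, hx, le_rfl⟩

theorem exists_cauchy_interpolant {R ι : Type*} [CommRing R] [Nontrivial R] [Fintype ι] {n : ℕ}
    (hn : Fintype.card ι < 2 * n) (a u v : ι → R) :
    ∃ P Q : R[X], (P ≠ 0 ∨ Q ≠ 0) ∧ P.degree < n ∧ Q.degree < n ∧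
      ∀ k, v k * P.eval (a k) = u k * Q.eval (a k) := by
  -- The `2n` coefficients of `P` and `Q` are subject to fewer than `2n` linear conditions.
  let L : Polynomial.degreeLT R n × Polynomial.degreeLT R n →ₗ[R] ι → R :=
    LinearMap.pi fun k =>
      (v k • Polynomial.leval (a k)) ∘ₗ (Polynomial.degreeLT R n).subtype ∘ₗ LinearMap.fst R _ _ -
      (u k • Polynomial.leval (a k)) ∘ₗ (Polynomial.degreeLT R n).subtype ∘ₗ LinearMap.snd R _ _
  have hL : ¬ Function.Injective L := fun hinj => by
    let e := Polynomial.degreeLTEquiv R n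
    have hcard : Fintype.card (Fin n ⊕ Fin n) ≤ Fintype.card ι :=
      card_le_of_injective R
        (L ∘ₗ (e.prodCongr e).symm.toLinearMap ∘ₗ
          (LinearEquiv.sumArrowLequivProdArrow (Fin n) (Fin n) R R).toLinearMap)
        (hinj.comp ((e.prodCongr e).symm.injective.comp (LinearEquiv.injective _)))
    rw [Fintype.card_sum, Fintype.card_fin] at hcard
    omega
  rw [injective_iff_map_eq_zero] at hL
  push Not at hL
  obtain ⟨⟨P, Q⟩, hPQ, hne⟩ := hL
  refine ⟨P, Q, ?_, Polynomial.mem_degreeLT.1 P.2, Polynomial.mem_degreeLT.1 Q.2, fun k => ?_⟩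
  · by_contra! h0
    exact hne (Prod.ext (Subtype.ext h0.1) (Subtype.ext h0.2))
  · simpa [L, sub_eq_zero] using congrFun hPQ k

variable {R : Type*} [CommRing R] [IsDomain R]

theorem finite_setOf_map_evalRingHom_eq_zero {P : R[X][X]} (hP : P ≠ 0) :
    {x | P.map (evalRingHom x) = 0}.Finite := by
  refine (Polynomial.finite_setOfPred_isRoot (Polynomial.leadingCoeff_ne_zero.2 hP)).subset
    fun x hx => ?_
  simpa using congr(Polynomial.coeff $hx P.natDegree)

theorem exists_map_mul_eq_map_mul_of_natDegree_le {S S' T : Set R} (hT : T.Infinite)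
    {f : R → R → R} (hcol : ∀ y ∈ T, IsRationalOn S (f · y)) (hS' : S' ⊆ S) {n : ℕ}
    {p q : R → R[X]} (hp : ∀ x ∈ S', (p x).natDegree ≤ n) (hq : ∀ x ∈ S', (q x).natDegree ≤ n)
    (hrow : ∀ x ∈ S', ∀ y ∈ T, f x y * (q x).eval y = (p x).eval y) :
    ∃ P Q : R[X][X], (P ≠ 0 ∨ Q ≠ 0) ∧
      ∀ x ∈ S', P.map (evalRingHom x) * q x = Q.map (evalRingHom x) * p x := by
  choose! u v huv using hcol
  let a : Fin (2 * n + 1) ↪ R := (Fin.valEmbedding.trans (hT.natEmbedding T)).trans (.subtype _)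
  have haT (k) : a k ∈ T := Subtype.prop _
  obtain ⟨P, Q, hPQ, hPdeg, hQdeg, hinterp⟩ := exists_cauchy_interpolant
    (show Fintype.card (Fin (2 * n + 1)) < 2 * (n + 1) by simp; omega)
    (fun k => Polynomial.C (a k)) (fun k => u (a k)) (fun k => v (a k))
  have degree_lt {F : R[X][X]} (hF : F.degree < (n + 1 : ℕ)) {s : R[X]} (hs : s.natDegree ≤ n)
      (x : R) :
      (F.map (evalRingHom x) * s).degree < (Finset.univ (α := Fin (2 * n + 1))).card := by
    have hFn : F.natDegree ≤ n :=
      Polynomial.natDegree_le_of_degree_le (Order.lt_succ_iff.1 hF)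
    refine (Polynomial.degree_le_of_natDegree_le
      (Polynomial.natDegree_mul_le_of_le (Polynomial.natDegree_map_le.trans hFn) hs)).trans_lt ?_
    rw [Finset.card_univ, Fintype.card_fin, Nat.cast_lt]
    omega
  refine ⟨P, Q, hPQ, fun x hx => ?_⟩
  -- Both sides have degree at most `2n` and agree at the `2n + 1` interpolation nodes.
  refine Polynomial.eq_of_degrees_lt_of_eval_index_eq Finset.univ a.injective.injOn
    (degree_lt hPdeg (hq x hx) x) (degree_lt hQdeg (hp x hx) x) fun k _ => ?_
  obtain ⟨hv, hfv⟩ := huv (a k) (haT k) x (hS' hx)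
  have hinterp_x := congr(Polynomial.eval x $(hinterp k))
  simp only [Polynomial.eval_mul, ← hfv] at hinterp_x
  have hPfQ : P.evalEval x (a k) = f x (a k) * Q.evalEval x (a k) :=
    mul_left_cancel₀ hv (by unfold Polynomial.evalEval; linear_combination hinterp_x)
  rw [Polynomial.eval_mul, Polynomial.eval_mul, map_evalRingHom_eval, map_evalRingHom_eval, hPfQ,
    ← hrow x hx _ (haT k)]
  ring

theorem exists_isRelPrime_mul_evalEval_eq [UniqueFactorizationMonoid R] {S T : Set R}
    (hS : ¬ S.Countable) (hT : T.Infinite)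
    {f : R → R → R} (hcol : ∀ y ∈ T, IsRationalOn S (f · y))
    (hrow : ∀ x ∈ S, IsRationalOn T (f x)) :
    ∃ P Q : R[X][X], IsRelPrime P Q ∧
      ∀ x ∈ S, ∀ y ∈ T, f x y * Q.evalEval x y = P.evalEval x y := by
  choose! p q hpq using hrow
  obtain ⟨n, hn⟩ := exists_infinite_setOf_le hS fun x => max (p x).natDegree (q x).natDegree
  obtain ⟨P₀, Q₀, hPQ₀, hcross⟩ := exists_map_mul_eq_map_mul_of_natDegree_le hT hcol
    (sep_subset S _) (fun x hx => (max_le_iff.1 hx.2).1) (fun x hx => (max_le_iff.1 hx.2).2)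
    fun x hx y hy => (hpq x hx.1 y hy).2
  obtain ⟨y₀, hy₀⟩ := hT.nonempty
  have hq (x) (hx : x ∈ S) : q x ≠ 0 := fun h0 => (hpq x hx y₀ hy₀).1 (by simp [h0])
  have hQ₀ : Q₀ ≠ 0 := by
    rintro rfl
    refine hn ((finite_setOf_map_evalRingHom_eq_zero (hPQ₀.resolve_right (· rfl))).subset
      fun x hx => ?_)
    simpa [hq x hx.1] using hcross x hx
  obtain ⟨P, Q, D, hrel, rfl, rfl⟩ :=
    UniqueFactorizationMonoid.exists_reduced_factors' P₀ Q₀ hQ₀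
  have hD := finite_setOf_map_evalRingHom_eq_zero (left_ne_zero_of_mul hQ₀)
  refine ⟨P, Q, hrel, fun x hx y hy => ?_⟩
  refine (hcol y hy).mul_eval_eq_of_infinite ((hn.sdiff hD).mono ?_) hx
  rintro s ⟨hs, hDs⟩
  refine ⟨hs.1, mul_right_cancel₀ (hpq s hs.1 y hy).1 ?_⟩
  have hreduced : P.map (evalRingHom s) * q s = Q.map (evalRingHom s) * p s := by
    refine mul_left_cancel₀ hDs ?_
    simpa only [Polynomial.map_mul, mul_assoc] using hcross s hs
  have hreduced_y := congr(Polynomial.eval y $hreduced)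
  simp only [Polynomial.eval_mul, map_evalRingHom_eval, ← (hpq s hs.1 y hy).2] at hreduced_y
  change f s y * Q.evalEval s y * _ = P.evalEval s y * _
  linear_combination -hreduced_y

end Bivariate

section Fibres

variable {R : Type*} [CommRing R]

theorem C_X_sub_C_dvd_iff_map_evalRingHom_eq_zero {P : R[X][X]} {x : R} :
    Polynomial.C (Polynomial.X - Polynomial.C x) ∣ P ↔ P.map (evalRingHom x) = 0 := by
  rw [Polynomial.C_dvd_iff_dvd_coeff, Polynomial.ext_iff]
  simp [Polynomial.dvd_iff_isRoot]

theorem map_evalRingHom_ne_zero_or_of_isRelPrime [Nontrivial R] {P Q : R[X][X]}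
    (h : IsRelPrime P Q) (x : R) :
    P.map (evalRingHom x) ≠ 0 ∨ Q.map (evalRingHom x) ≠ 0 := by
  by_contra! h0
  simp only [← C_X_sub_C_dvd_iff_map_evalRingHom_eq_zero] at h0
  exact Polynomial.not_isUnit_X_sub_C x (Polynomial.isUnit_C.1 (h h0.1 h0.2))

end Fibres

section Bezout

open IsLocalization (integerNormalization integerNormalization_spec
  to_map_ne_zero_of_mem_nonZeroDivisors)

variable {R : Type*} [CommRing R] [IsDomain R]
  (K : Type*) [Field K] [Algebra R K] [IsFractionRing R K]

variable {K} in
theorem map_primPart_integerNormalization_dvd [NormalizedGCDMonoid R] (d : K[X]) :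
    (integerNormalization R⁰ d).primPart.map (algebraMap R K) ∣ d := by
  obtain ⟨c, hc, hcd⟩ := integerNormalization_spec R⁰ d
  have hdvd := Polynomial.map_dvd (algebraMap R K) (integerNormalization R⁰ d).primPart_dvd
  rw [hcd, ← algebraMap_smul K, Polynomial.smul_eq_C_mul] at hdvd
  refine (IsUnit.dvd_mul_left ?_).1 hdvd
  exact Polynomial.isUnit_C.2 (to_map_ne_zero_of_mem_nonZeroDivisors K le_rfl hc).isUnit

variable [IsGCDMonoid R] {P Q : R[X]}

theorem isRelPrime_map_algebraMap (h : IsRelPrime P Q) :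
    IsRelPrime (P.map (algebraMap R K)) (Q.map (algebraMap R K)) := by
  let : NormalizedGCDMonoid R := Nonempty.some inferInstance
  intro d hdP hdQ
  have hd : d ≠ 0 := by
    rintro rfl
    simp only [zero_dvd_iff, Polynomial.map_eq_zero_iff (IsFractionRing.injective R K)] at hdP hdQ
    exact not_isUnit_zero (h (hdP ▸ dvd_rfl) (hdQ ▸ dvd_rfl))
  have hprim := (integerNormalization R⁰ d).isPrimitive_primPart
  have hdvd := map_primPart_integerNormalization_dvd (R := R) d
  exact Polynomial.isUnit_or_eq_zero_of_isUnit_integerNormalization_primPart hd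
    (h (hprim.dvd_of_fraction_map_dvd_fraction_map (hdvd.trans hdP))
      (hprim.dvd_of_fraction_map_dvd_fraction_map (hdvd.trans hdQ)))

theorem exists_mul_add_mul_eq_C_of_isRelPrime (h : IsRelPrime P Q) :
    ∃ (a b : R[X]) (r : R), r ≠ 0 ∧ a * P + b * Q = Polynomial.C r := by
  let L := FractionRing R
  obtain ⟨a, b, hab⟩ := (isRelPrime_map_algebraMap L h).isCoprime
  obtain ⟨c, hc, hca⟩ := integerNormalization_spec R⁰ a
  obtain ⟨d, hd, hdb⟩ := integerNormalization_spec R⁰ b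
  refine ⟨Polynomial.C d * integerNormalization R⁰ a, Polynomial.C c * integerNormalization R⁰ b,
    c * d, mul_ne_zero (nonZeroDivisors.ne_zero hc) (nonZeroDivisors.ne_zero hd), ?_⟩
  apply Polynomial.map_injective _ (IsFractionRing.injective R L)
  rw [← algebraMap_smul L, Polynomial.smul_eq_C_mul] at hca hdb
  simp only [Polynomial.map_add, Polynomial.map_mul, hca, hdb, Polynomial.map_C, map_mul]
  linear_combination Polynomial.C (algebraMap R L c) * Polynomial.C (algebraMap R L d) * hab

theorem exists_ne_zero_eval_eq_zero_of_isRelPrime {P Q : R[X][X]} (h : IsRelPrime P Q) :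
    ∃ r : R[X], r ≠ 0 ∧
      ∀ x y, P.evalEval x y = 0 → Q.evalEval x y = 0 → r.eval x = 0 := by
  obtain ⟨a, b, r, hr, hab⟩ := exists_mul_add_mul_eq_C_of_isRelPrime h
  refine ⟨r, hr, fun x y hP hQ => ?_⟩
  have hab_xy := congr(Polynomial.evalEval x y $hab)
  rwa [Polynomial.evalEval_add, Polynomial.evalEval_mul, Polynomial.evalEval_mul, hP, hQ, mul_zero,
    mul_zero, add_zero, Polynomial.evalEval_C, eq_comm] at hab_xy

end Bezout

section Zeros

theorem exists_eq_zero_of_norm_lt_of_forall_mem_frontier {E : Type*} [NormedAddCommGroup E]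
    [NormedSpace ℂ E] [Nontrivial E] {U : Set E} (hU : Bornology.IsBounded U) {g : E → ℂ}
    (hg : DiffContOnCl ℂ g U) {m : ℝ} (hm : ∀ w ∈ frontier U, m ≤ ‖g w‖) {z : E}
    (hz : z ∈ closure U) (hgz : ‖g z‖ < m) : ∃ w ∈ closure U, g w = 0 := by
  by_contra! hne
  have hm_pos : 0 < m := (norm_nonneg _).trans_lt hgz
  have hinv : ‖(g z)⁻¹‖ ≤ m⁻¹ :=
    Complex.norm_le_of_forall_mem_frontier_norm_le hU (hg.inv hne)
      (fun w hw => by simpa only [Pi.inv_apply, norm_inv] using inv_anti₀ hm_pos (hm w hw)) hz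
  rw [norm_inv, inv_le_inv₀ (norm_pos_iff.2 (hne z hz)) hm_pos] at hinv
  exact hgz.not_ge hinv

theorem eventually_exists_eq_zero {X : Type*} [TopologicalSpace X] {F : X → ℂ → ℂ}
    (hF : Continuous (Function.uncurry F)) (hdiff : ∀ x, Differentiable ℂ (F x)) {x₀ : X} {y₀ : ℂ}
    (hzero : F x₀ y₀ = 0) (hne : F x₀ ≠ 0) {V : Set ℂ} (hV : V ∈ 𝓝 y₀) :
    ∀ᶠ x in 𝓝 x₀, ∃ y ∈ V, F x y = 0 := by
  have hpunct : ∀ᶠ y in 𝓝 y₀, y ≠ y₀ → F x₀ y ≠ 0 := by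
    refine eventually_nhdsWithin_iff.1 (((hdiff x₀).analyticAt
      y₀).eventually_eq_zero_or_eventually_ne_zero.resolve_left fun h0 => hne ?_)
    exact AnalyticOnNhd.eq_of_eventuallyEq (fun z _ => (hdiff x₀).analyticAt z)
      (fun z _ => analyticAt_const) h0
  obtain ⟨r, hr, hball⟩ := nhds_basis_closedBall.mem_iff.1 (inter_mem hV hpunct)
  have hsphere (y) (hy : y ∈ sphere y₀ r) : 0 < ‖F x₀ y‖ :=
    norm_pos_iff.2 ((hball (sphere_subset_closedBall hy)).2 (ne_of_mem_sphere hy hr.ne'))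
  obtain ⟨M, hM, hFM⟩ := (isCompact_sphere y₀ r).exists_forall_le'
    (hdiff x₀).continuous.norm.continuousOn hsphere
  obtain ⟨m, hm, hmM⟩ := exists_between hM
  have hlarge : ∀ᶠ x in 𝓝 x₀, ∀ y ∈ sphere y₀ r, m < ‖F x y‖ :=
    (isCompact_sphere y₀ r).eventually_forall_of_forall_eventually fun y hy =>
      hF.norm.continuousAt.eventually (lt_mem_nhds (hmM.trans_le (hFM y hy)))
  have hsmall : ∀ᶠ x in 𝓝 x₀, ‖F x y₀‖ < m :=
    (hF.comp (.prodMk_left y₀)).norm.continuousAt.eventually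
      (gt_mem_nhds (by simpa [hzero] using hm))
  filter_upwards [hlarge, hsmall] with x hx_large hx_small
  obtain ⟨y, hy, hFy⟩ := exists_eq_zero_of_norm_lt_of_forall_mem_frontier isBounded_ball
    (hdiff x).diffContOnCl (fun y hy => (hx_large y (frontier_ball_subset_sphere hy)).le)
    (subset_closure (mem_ball_self hr)) hx_small
  exact ⟨y, (hball (closure_ball_subset_closedBall hy)).1, hFy⟩

theorem eval_equivMvPolynomial {R : Type*} [CommRing R] (P : R[X][X]) (z : Fin 2 → R) :
    eval z (Polynomial.Bivariate.equivMvPolynomial R P) = P.evalEval (z 0) (z 1) := by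
  have hcomp : (aeval z).comp (Polynomial.Bivariate.equivMvPolynomial R).toAlgHom =
      Polynomial.aevalAeval (z 0) (z 1) := by
    ext <;> simp
  rw [← Polynomial.coe_aevalAeval_eq_evalEval, ← hcomp, ← coe_aeval_eq_eval]
  rfl

theorem continuous_uncurry_evalEval {R : Type*} [CommRing R] [TopologicalSpace R]
    [IsTopologicalRing R] (P : R[X][X]) :
    Continuous (Function.uncurry fun x y => P.evalEval x y) := by
  have heq : (Function.uncurry fun x y => P.evalEval x y) = fun z : R × R =>
      eval ![z.1, z.2] (Polynomial.Bivariate.equivMvPolynomial R P) := by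
    ext z
    simp [eval_equivMvPolynomial, Function.uncurry]
  rw [heq]
  exact (MvPolynomial.continuous_eval _).comp (by fun_prop)

theorem analyticOnNhd_evalEval (P : ℂ[X][X]) (U : Set (Fin 2 → ℂ)) :
    AnalyticOnNhd ℂ (fun z => P.evalEval (z 0) (z 1)) U := by
  simp only [← eval_equivMvPolynomial]
  exact (AnalyticOnNhd.eval_mvPolynomial _).mono (subset_univ U)

theorem evalEval_ne_zero_of_eventually {P Q : ℂ[X][X]} (hPQ : IsRelPrime P Q) {x₀ y₀ : ℂ}
    (h : ∀ᶠ z in 𝓝 (x₀, y₀), Q.evalEval z.1 z.2 = 0 → P.evalEval z.1 z.2 = 0) :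
    Q.evalEval x₀ y₀ ≠ 0 := by
  intro hQ
  obtain ⟨V, hV, W, hW, hVW⟩ := mem_nhds_prod_iff.1 h
  have hfibre : Q.map (evalRingHom x₀) ≠ 0 := by
    intro hQ0
    refine (map_evalRingHom_ne_zero_or_of_isRelPrime hPQ x₀).elim (fun hP => hP ?_) (· hQ0)
    refine Polynomial.eq_zero_of_infinite_isRoot _
      ((infinite_of_mem_nhds y₀ hW).mono fun y hy => ?_)
    have hQy : Q.evalEval x₀ y = 0 := by rw [← map_evalRingHom_eval, hQ0, Polynomial.eval_zero]
    simpa only [mem_ofPred_eq, Polynomial.IsRoot, map_evalRingHom_eval] using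
      hVW (mk_mem_prod (mem_of_mem_nhds hV) hy) hQy
  have hfibre_zeros : ∀ᶠ x in 𝓝 x₀, ∃ y ∈ W, Q.evalEval x y = 0 := by
    refine eventually_exists_eq_zero (continuous_uncurry_evalEval Q) (fun x => ?_) hQ
      (fun h0 => hfibre (Polynomial.funext fun y => ?_)) hW
    · simpa only [map_evalRingHom_eval] using (Q.map (evalRingHom x)).differentiable
    · simpa only [map_evalRingHom_eval, Polynomial.eval_zero] using! congrFun h0 y
  obtain ⟨r, hr, hcommon⟩ := exists_ne_zero_eval_eq_zero_of_isRelPrime hPQ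
  have hr_zeros : {x | r.IsRoot x} ∈ 𝓝 x₀ := by
    filter_upwards [hV, hfibre_zeros] with x hx ⟨y, hy, hQxy⟩
    exact hcommon x y (hVW (mk_mem_prod hx hy) hQxy) hQxy
  exact infinite_of_mem_nhds x₀ hr_zeros (Polynomial.finite_setOfPred_isRoot hr)

end Zeros

section CoordinateDiscs

/-- Regularity of a function on an arbitrary subset of affine space: for every point of `W` there
is a quotient of polynomials, with denominator not vanishing at that point, which equals `f`
wherever on `W` it is defined. -/
def IsRegularOn {σ K : Type*} [Field K] (W : Set (σ → K)) (f : (σ → K) → K) : Prop :=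
  ∀ a ∈ W, ∃ p q : MvPolynomial σ K, eval a q ≠ 0 ∧
    ∀ z ∈ W, eval z q ≠ 0 → f z = eval z p / eval z q

/-- The disc of radius `r` about `c` in the complex line through `c` parallel to the `i`-th
coordinate axis. -/
def coordinateDisc {ι : Type*} [DecidableEq ι] (c : ι → ℂ) (i : ι) (r : ℝ) : Set (ι → ℂ) :=
  Function.update c i '' ball (c i) r

theorem eval_aeval_update {σ R : Type*} [DecidableEq σ] [CommRing R] (c : σ → R) (i : σ)
    (p : MvPolynomial σ R) (t : R) :
    (aeval (Function.update (Polynomial.C ∘ c) i Polynomial.X) p).eval t =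
      eval (Function.update c i t) p := by
  have hcomp : (Polynomial.aeval t).comp
      (aeval (Function.update (Polynomial.C ∘ c) i Polynomial.X)) =
        aeval (Function.update c i t) := by
    ext j
    obtain rfl | hj := eq_or_ne j i <;> simp [*]
  rw [← coe_aeval_eq_eval, ← hcomp, ← Polynomial.coe_aeval_eq_eval]
  rfl

theorem IsRegularOn.isRationalOn_update {σ K : Type*} [DecidableEq σ] [Field K] {S : Set K}
    (hS : S.Infinite) {c : σ → K} {i : σ} {f : (σ → K) → K}
    (hf : IsRegularOn (Function.update c i '' S) f) :
    IsRationalOn S fun t => f (Function.update c i t) := by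
  refine isRationalOn_of_forall_exists hS fun a ha => ?_
  obtain ⟨p, q, hqa, hpq⟩ := hf _ (mem_image_of_mem _ ha)
  refine ⟨aeval (Function.update (Polynomial.C ∘ c) i Polynomial.X) p,
    aeval (Function.update (Polynomial.C ∘ c) i Polynomial.X) q, ?_, fun t ht => ?_⟩
  · rwa [eval_aeval_update]
  · rw [eval_aeval_update, eval_aeval_update]
    exact fun hqt => (eq_div_iff hqt).1 (hpq _ (mem_image_of_mem _ ht) hqt)

theorem irreducible_X_sub_C {σ R : Type*} [CommRing R] [IsDomain R] (i : σ) (a : R) :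
    Irreducible (X i - C a : MvPolynomial σ R) := by
  simpa [sub_eq_add_neg] using irreducible_mul_X_add (1 : MvPolynomial σ R) (C (-a)) i one_ne_zero
    (by simp) (by simp) isRelPrime_one_left

theorem isSmoothComplexArc_coordinateDisc {i j : Fin 2} (hij : i ≠ j) (c : Fin 2 → ℂ) {r : ℝ}
    (hr : 0 < r) : IsSmoothComplexArc (X j - C (c j)) (coordinateDisc c i r) := by
  refine ⟨?_, ⟨{z | z i ∈ ball (c i) r}, isOpen_ball.preimage (continuous_apply i), ?_⟩, ?_⟩
  · rintro _ ⟨t, -, rfl⟩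
    refine ⟨by simp [hij.symm], ?_⟩
    fin_cases j <;> simp
  · ext z
    simp only [coordinateDisc, complexZeroSet, mem_image, mem_inter_iff, mem_ofPred_eq, map_sub,
      eval_X, eval_C, sub_eq_zero]
    constructor
    · rintro ⟨t, ht, rfl⟩
      simpa [hij.symm] using ht
    · rintro ⟨hzi, hzj⟩
      refine ⟨z i, hzi, Function.update_eq_iff.2 ⟨rfl, fun k hk => ?_⟩⟩
      rw [show k = j by omega, hzj]
  · have hemb : Topology.IsEmbedding (Function.update c i) :=
      Function.LeftInverse.isEmbedding (f := fun z => z i) (fun t => by simp)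
        (continuous_apply i) (by fun_prop)
    exact ⟨(hemb.homeomorphImage _).symm.trans
      (OpenPartialHomeomorph.unitBallBall (c i) r hr).toHomeomorphSourceTarget.symm⟩

end CoordinateDiscs

section Gluing

theorem not_countable_of_mem_nhds (𝕜 : Type*) {E : Type*} [NontriviallyNormedField 𝕜]
    [CompleteSpace 𝕜] [AddCommGroup E] [Module 𝕜 E] [Nontrivial E] [TopologicalSpace E]
    [ContinuousAdd E] [ContinuousSMul 𝕜 E] {s : Set E} {z : E} (hs : s ∈ 𝓝 z) :
    ¬ s.Countable := fun hcount => by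
  have hz := mem_interior_iff_mem_nhds.2 hs
  rwa [interior_eq_empty_iff_dense_compl.2 (hcount.dense_compl 𝕜)] at hz

theorem isRationalOn_update_of_isRegularOn_coordinateDisc {ι : Type*} [Fintype ι]
    [DecidableEq ι] {U : Set (ι → ℂ)} {f : (ι → ℂ) → ℂ} {z : ι → ℂ} {r : ℝ}
    (hball : ball z r ⊆ U) (hdisc : ∀ i c r, 0 < r → coordinateDisc c i r ⊆ U →
      IsRegularOn (coordinateDisc c i r) f) {c : ι → ℂ} (hc : c ∈ ball z r) (i : ι) :
    IsRationalOn (ball (z i) r) fun t => f (Function.update c i t) := by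
  have hr : 0 < r := pos_of_mem_ball hc
  have hreg := hdisc i (Function.update c i (z i)) r hr
  simp only [coordinateDisc, Function.update_idem, Function.update_self] at hreg
  refine (hreg ?_).isRationalOn_update (infinite_of_mem_nhds _ (ball_mem_nhds _ hr))
  rintro _ ⟨t, ht, rfl⟩
  refine hball ((dist_pi_lt_iff hr).2 fun k => ?_)
  obtain rfl | hk := eq_or_ne k i
  · simpa using ht
  · simpa [hk] using (dist_pi_lt_iff hr).1 hc k

variable {U : Set (Fin 2 → ℂ)} {f : (Fin 2 → ℂ) → ℂ}

theorem exists_isRelPrime_eventually_mul_evalEval_eq {z : Fin 2 → ℂ}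
    (hU : U ∈ 𝓝 z) (hdisc : ∀ i c r, 0 < r → coordinateDisc c i r ⊆ U →
      IsRegularOn (coordinateDisc c i r) f) :
    ∃ P Q : ℂ[X][X], IsRelPrime P Q ∧
      ∀ᶠ w in 𝓝 z, f w * Q.evalEval (w 0) (w 1) = P.evalEval (w 0) (w 1) := by
  obtain ⟨r, hr, hball⟩ := Metric.mem_nhds_iff.1 hU
  have mem_ball_iff (x y : ℂ) : ![x, y] ∈ ball z r ↔ x ∈ ball (z 0) r ∧ y ∈ ball (z 1) r := by
    simp [dist_pi_lt_iff hr]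
  have hrational {c : Fin 2 → ℂ} := isRationalOn_update_of_isRegularOn_coordinateDisc hball hdisc
    (c := c)
  have hcol (y) (hy : y ∈ ball (z 1) r) : IsRationalOn (ball (z 0) r) fun x => f ![x, y] := by
    convert hrational ((mem_ball_iff (z 0) y).2 ⟨mem_ball_self hr, hy⟩) 0 using 3 with x
    ext k
    fin_cases k <;> rfl
  have hrow (x) (hx : x ∈ ball (z 0) r) : IsRationalOn (ball (z 1) r) fun y => f ![x, y] := by
    convert hrational ((mem_ball_iff x (z 1)).2 ⟨hx, mem_ball_self hr⟩) 1 using 3 with y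
    ext k
    fin_cases k <;> rfl
  obtain ⟨P, Q, hPQ, hf⟩ := exists_isRelPrime_mul_evalEval_eq
    (not_countable_of_mem_nhds ℂ (ball_mem_nhds (z 0) hr))
    (infinite_of_mem_nhds _ (ball_mem_nhds _ hr)) hcol hrow
  refine ⟨P, Q, hPQ, ?_⟩
  filter_upwards [ball_mem_nhds z hr] with w hw
  obtain ⟨x, y, rfl⟩ : ∃ x y, w = ![x, y] := ⟨w 0, w 1, (FinVec.etaExpand_eq w).symm⟩
  exact hf x ((mem_ball_iff x y).1 hw).1 y ((mem_ball_iff x y).1 hw).2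

theorem evalEval_ne_zero_of_eventually_mul_evalEval_eq {P Q : ℂ[X][X]} (hPQ : IsRelPrime P Q)
    {z : Fin 2 → ℂ}
    (hf : ∀ᶠ w in 𝓝 z, f w * Q.evalEval (w 0) (w 1) = P.evalEval (w 0) (w 1)) :
    Q.evalEval (z 0) (z 1) ≠ 0 := by
  refine evalEval_ne_zero_of_eventually hPQ ?_
  have hcont : Tendsto (fun w : ℂ × ℂ => ![w.1, w.2]) (𝓝 (z 0, z 1)) (𝓝 z) :=
    Continuous.tendsto' (by fun_prop) _ _ (FinVec.etaExpand_eq z)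
  filter_upwards [hcont.eventually hf] with w hw hQ
  simpa [hQ, eq_comm] using hw

theorem analyticAt_of_eventually_mul_evalEval_eq {P Q : ℂ[X][X]} (hPQ : IsRelPrime P Q)
    {z : Fin 2 → ℂ}
    (hf : ∀ᶠ w in 𝓝 z, f w * Q.evalEval (w 0) (w 1) = P.evalEval (w 0) (w 1)) :
    AnalyticAt ℂ f z := by
  have hQz := evalEval_ne_zero_of_eventually_mul_evalEval_eq hPQ hf
  have hQ := analyticOnNhd_evalEval Q univ z (mem_univ z)
  refine ((analyticOnNhd_evalEval P univ z (mem_univ z)).div hQ hQz).congr ?_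
  filter_upwards [hf, hQ.continuousAt.eventually_ne hQz] with w hw hQw
  exact ((eq_div_iff hQw).2 hw).symm

end Gluing

theorem regular_of_regular_on_smooth_arcs_complex_plane_general
    {U : Set (Fin 2 → ℂ)} (hU : IsOpen U) (hconn : IsPreconnected U) {f : (Fin 2 → ℂ) → ℂ}
    (hdisc : ∀ i c r, 0 < r → coordinateDisc c i r ⊆ U → IsRegularOn (coordinateDisc c i r) f) :
    ∃ p q : MvPolynomial (Fin 2) ℂ, ∀ z ∈ U, eval z q ≠ 0 ∧ f z = eval z p / eval z q := by
  have hlocal (z) (hz : z ∈ U) :=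
    exists_isRelPrime_eventually_mul_evalEval_eq (hU.mem_nhds hz) hdisc
  have hf : AnalyticOnNhd ℂ f U := fun z hz => by
    obtain ⟨P, Q, hPQ, hPQf⟩ := hlocal z hz
    exact analyticAt_of_eventually_mul_evalEval_eq hPQ hPQf
  obtain rfl | ⟨z₀, hz₀⟩ := U.eq_empty_or_nonempty
  · simp
  obtain ⟨P, Q, hPQ, hPQz₀⟩ := hlocal z₀ hz₀
  have hPQU : ∀ z ∈ U, f z * Q.evalEval (z 0) (z 1) = P.evalEval (z 0) (z 1) :=
    (hf.mul (analyticOnNhd_evalEval Q U)).eqOn_of_preconnected_of_eventuallyEq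
      (analyticOnNhd_evalEval P U) hconn hz₀ hPQz₀
  refine ⟨Polynomial.Bivariate.equivMvPolynomial ℂ P, Polynomial.Bivariate.equivMvPolynomial ℂ Q,
    fun z hz => ?_⟩
  have hQz : Q.evalEval (z 0) (z 1) ≠ 0 :=
    evalEval_ne_zero_of_eventually_mul_evalEval_eq hPQ (eventually_of_mem (hU.mem_nhds hz) hPQU)
  simpa only [eval_equivMvPolynomial] using And.intro hQz ((eq_div_iff hQz).2 (hPQU z hz))

/-- **Theorem 9.1** for domains in `ℂ²`. If `f : U → ℂ`, defined on a nonempty connected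
open set `U ⊆ ℂ²`, is regular on every smooth algebraic arc contained in `U`, then `f`
is regular on `U`. -/
theorem regular_of_regular_on_smooth_arcs_complex_plane
    (U : Set (Fin 2 → ℂ)) (hU : IsOpen U) (hne : U.Nonempty) (hconn : IsConnected U)
    (f : (Fin 2 → ℂ) → ℂ)
    (harc : ∀ P : MvPolynomial (Fin 2) ℂ, Irreducible P →
      ∀ A : Set (Fin 2 → ℂ), IsSmoothComplexArc P A → A ⊆ U →
        ∀ a ∈ A, ∃ p q : MvPolynomial (Fin 2) ℂ, eval a q ≠ 0 ∧
          ∀ z ∈ A, eval z q ≠ 0 → f z = eval z p / eval z q) :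
    ∀ x ∈ U, ∃ p q : MvPolynomial (Fin 2) ℂ, eval x q ≠ 0 ∧
      ∀ y ∈ U, eval y q ≠ 0 → f y = eval y p / eval y q := by
  obtain ⟨p, q, hpq⟩ := regular_of_regular_on_smooth_arcs_complex_plane_general hU
    hconn.isPreconnected fun i c r hr hsub => harc _ (irreducible_X_sub_C (i + 1) (c (i + 1))) _
      (isSmoothComplexArc_coordinateDisc (by omega) c hr) hsub
  exact fun x hx => ⟨p, q, (hpq x hx).1, fun y hy _ => (hpq y hy).2⟩
end
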